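/- arXiv:1206.6139 — 4 statements merged into one kernel-verified Lean document; each statement's English description precedes it below -/
import Mathlib

section
/- Let m be an odd squarefree positive integer and let f : (Z/mZ)* → [0,1] be a function with ∑_{x ∈ (Z/mZ)*} f(x) > (5/8)·φ(m), where φ is Euler's totient function. Then for every x ∈ Z/mZ there exist units a₁, a₂, a₃ ∈ (Z/mZ)* with x = a₁ + a₂ + a₃ such that f(a₁)f(a₂)f(a₃) > 0 and f(a₁) + f(a₂) + f(a₃) > 3/2. -/
/-!
Call three averages admissible if their pairwise products sum to more than `5/8` of their sum. By
the Chinese remainder theorem, the theorem for `m` can be proved one prime at a time: averaging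
over the fibres of `(ℤ/mℤ)ˣ → (ℤ/pℤ)ˣ` gives functions on `(ℤ/pℤ)ˣ`, and one has to solve
`x = a₁ + a₂ + a₃` there with values that are again good enough for the remaining primes.

For `p ≥ 7` admissibility itself is preserved. Sort the values of the three functions in decreasing
order; by Cauchy–Davenport, all `x` are sums of units whose values are at least the entries at
positions `i, j, k` as soon as `i + j + k ≥ p - 1`. If all such triples of entries were
inadmissible, then splitting every sequence into two halves and averaging over the solutions of
`i + j + k = 0` modulo `(p - 1) / 2` would make the averages of the sequences inadmissible too.

At `3` and `5` admissibility is lost, but an admissible triple leads at `3` to a triple with a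
different property, from which `5` reaches the conclusion. When `15` does not divide `m`, the
functions are first pulled back to a multiple of `m` that is divisible by `15`.
-/

open Finset
open scoped BigOperators Pointwise

/-- The excess of a triple of averages: it is positive exactly when the sum of the pairwise
products exceeds `5/8` times the sum, and it is affine in each of its three arguments. -/
noncomputable def excess (a b c : ℝ) : ℝ := a * b + b * c + c * a - 5 / 8 * (a + b + c)

section Excess

variable {a b c a' b' c' : ℝ}

lemma excess_rotate (a b c : ℝ) : excess a b c = excess b c a := by
  unfold excess; ring

lemma excess_swap (a b c : ℝ) : excess a b c = excess b a c := by
  unfold excess; ring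

lemma excess_comp_perm (g : Fin 3 → ℝ) (π : Equiv.Perm (Fin 3)) :
    excess (g (π 0)) (g (π 1)) (g (π 2)) = excess (g 0) (g 1) (g 2) := by
  have excess_eq (g : Fin 3 → ℝ) :
      excess (g 0) (g 1) (g 2) = ((∑ k, g k) ^ 2 - ∑ k, g k ^ 2) / 2 - 5 / 8 * ∑ k, g k := by
    simp only [excess, Fin.sum_univ_three]
    ring
  rw [excess_eq (g <| π ·), excess_eq, Equiv.sum_comp π g, Equiv.sum_comp π (g · ^ 2)]

lemma excess_eq_sub_mul_sub_add (a b c : ℝ) :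
    excess a b c = (a - 5 / 8) * (b - 5 / 8) - (5 / 8) ^ 2 + c * (a + b - 5 / 8) := by
  unfold excess; ring

lemma four_mul_excess_midpoints (a b c a' b' c' : ℝ) :
    4 * excess ((a + a') / 2) ((b + b') / 2) ((c + c') / 2) =
      excess a b c' + excess a b' c + excess a' b c + excess a' b' c' := by
  unfold excess; ring

lemma excess_nonpos_of_add_le (ha : 0 ≤ a) (hb : 0 ≤ b) (hc : 0 ≤ c) (h : a + b ≤ 5 / 8) :
    excess a b c ≤ 0 := by
  rw [excess_eq_sub_mul_sub_add]
  have hprod : (a - 5 / 8) * (b - 5 / 8) ≤ (5 / 8) ^ 2 := by nlinarith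
  have hlast : c * (a + b - 5 / 8) ≤ 0 := mul_nonpos_of_nonneg_of_nonpos hc (by linarith)
  linarith

lemma add_gt_of_excess_pos (ha : 0 ≤ a) (hb : 0 ≤ b) (hc : 0 ≤ c) (h : 0 < excess a b c) :
    5 / 8 < a + b := by
  by_contra! hab
  exact h.not_ge (excess_nonpos_of_add_le ha hb hc hab)

lemma excess_le_excess_right (hab : 5 / 8 ≤ a + b) (hc : c ≤ c') :
    excess a b c ≤ excess a b c' := by
  simp only [excess_eq_sub_mul_sub_add]
  gcongr

lemma excess_le_excess (ha : a ≤ a') (hb : b ≤ b') (hc : c ≤ c') (hab : 5 / 8 ≤ a + b)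
    (hbc : 5 / 8 ≤ b + c) (hca : 5 / 8 ≤ c + a) : excess a b c ≤ excess a' b' c' :=
  calc
    excess a b c = excess b c a := excess_rotate a b c
    _ ≤ excess b c a' := excess_le_excess_right hbc ha
    _ = excess c a' b := excess_rotate b c a'
    _ ≤ excess c a' b' := excess_le_excess_right (by linarith) hb
    _ = excess a' b' c := excess_rotate c a' b'
    _ ≤ excess a' b' c' := excess_le_excess_right (by linarith) hc

lemma excess_pos_of_le (ha₀ : 0 ≤ a) (hb₀ : 0 ≤ b) (hc₀ : 0 ≤ c) (ha : a ≤ a') (hb : b ≤ b')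
    (hc : c ≤ c') (h : 0 < excess a b c) : 0 < excess a' b' c' := by
  have hab := add_gt_of_excess_pos ha₀ hb₀ hc₀ h
  have hbc := add_gt_of_excess_pos hb₀ hc₀ ha₀ (excess_rotate a b c ▸ h)
  have hca := add_gt_of_excess_pos hc₀ ha₀ hb₀ (excess_rotate c a b ▸ h)
  exact h.trans_le (excess_le_excess ha hb hc hab.le hbc.le hca.le)

lemma excess_le_nine_eighths (ha : a ∈ Set.Icc 0 1) (hb : b ∈ Set.Icc 0 1)
    (hc : c ∈ Set.Icc 0 1) : excess a b c ≤ 9 / 8 := by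
  simp only [Set.mem_Icc] at ha hb hc
  by_cases hpos : 0 < excess a b c
  · have hab := add_gt_of_excess_pos ha.1 hb.1 hc.1 hpos
    have hbc := add_gt_of_excess_pos hb.1 hc.1 ha.1 (excess_rotate a b c ▸ hpos)
    have hca := add_gt_of_excess_pos hc.1 ha.1 hb.1 (excess_rotate c a b ▸ hpos)
    calc
      excess a b c ≤ excess 1 1 1 := excess_le_excess ha.2 hb.2 hc.2 hab.le hbc.le hca.le
      _ = 9 / 8 := by norm_num [excess]
  · linarith

lemma neg_five_eighths_le_excess (ha : a ∈ Set.Icc 0 1) (hb : b ∈ Set.Icc 0 1)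
    (hc : c ∈ Set.Icc 0 1) : -5 / 8 ≤ excess a b c := by
  simp only [Set.mem_Icc] at ha hb hc
  rw [excess_eq_sub_mul_sub_add]
  rcases le_total (5 / 8) (a + b) with hab | hab
  · have hprod : -15 / 64 ≤ (a - 5 / 8) * (b - 5 / 8) := by
      nlinarith [mul_nonneg ha.1 (sub_nonneg.2 hb.2), mul_nonneg hb.1 (sub_nonneg.2 ha.2)]
    have hlast : 0 ≤ c * (a + b - 5 / 8) := mul_nonneg hc.1 (by linarith)
    linarith
  · have hlast : a + b - 5 / 8 ≤ c * (a + b - 5 / 8) := le_mul_of_le_one_left (by linarith) hc.2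
    nlinarith [mul_nonneg ha.1 hb.1]

lemma excess_nonpos_of_sum_le (ha : 0 ≤ a) (hb : 0 ≤ b) (hc : 0 ≤ c) (h : a + b + c ≤ 15 / 8) :
    excess a b c ≤ 0 := by
  have hpairs : a * b + b * c + c * a ≤ (a + b + c) ^ 2 / 3 := by
    nlinarith [sq_nonneg (a - b), sq_nonneg (b - c), sq_nonneg (c - a)]
  have hsum : (a + b + c) ^ 2 / 3 ≤ 5 / 8 * (a + b + c) := by nlinarith
  unfold excess
  linarith

lemma excess_zero_nonpos (hb : b ∈ Set.Icc 0 1) (hc : c ∈ Set.Icc 0 1) : excess 0 b c ≤ 0 := by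
  simp only [Set.mem_Icc] at hb hc
  unfold excess
  nlinarith [mul_nonneg hb.1 (sub_nonneg.2 hc.2), mul_nonneg hc.1 (sub_nonneg.2 hb.2)]

lemma excess_nonpos_of_le_half (ha : a ∈ Set.Icc 0 1) (hb : b ∈ Set.Icc 0 (1 / 2))
    (hc : c ∈ Set.Icc 0 (1 / 2)) : excess a b c ≤ 0 := by
  by_contra! hpos
  have hle := excess_pos_of_le ha.1 hb.1 hc.1 ha.2 hb.2 hc.2 hpos
  norm_num [excess] at hle

end Excess

section MixedExcess

variable {ρ σ τ d e f p q r x y z : ℝ}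

lemma complements_pairSum_le (hρσ : σ ≤ ρ) (hστ : τ ≤ σ) (hpair : 5 / 8 ≤ σ + τ)
    (hsmall : ρ + σ < 9 / 10 ∨ 3 * ρ + 2 * τ < 9 / 4) :
    (1 - ρ) * (1 - σ) + (1 - σ) * (1 - τ) + (1 - τ) * (1 - ρ) ≤ -6 * excess ρ σ τ := by
  unfold excess
  rcases hsmall with hsmall | hsmall <;> nlinarith

lemma increments_pairSum_le_of_ordered (hρσ : σ ≤ ρ) (hστ : τ ≤ σ) (hpair : 5 / 8 ≤ σ + τ)
    (hd : d ∈ Set.Icc 0 (1 - ρ)) (he : e ∈ Set.Icc 0 (1 - σ)) (hf : f ∈ Set.Icc 0 (1 - τ))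
    (hσe : excess ρ (σ + e) τ ≤ 0) (hτf : excess ρ σ (τ + f) ≤ 0) :
    d * e + e * f + f * d ≤ -6 * excess ρ σ τ := by
  simp only [Set.mem_Icc] at hd he hf
  by_cases hsmall : ρ + σ < 9 / 10 ∨ 3 * ρ + 2 * τ < 9 / 4
  · calc
      d * e + e * f + f * d
        ≤ (1 - ρ) * (1 - σ) + (1 - σ) * (1 - τ) + (1 - τ) * (1 - ρ) := by
          gcongr <;> linarith
      _ ≤ -6 * excess ρ σ τ := complements_pairSum_le hρσ hστ hpair hsmall
  · push Not at hsmall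
    have he_mul : e * (ρ + τ - 5 / 8) ≤ -excess ρ σ τ := by unfold excess at *; linarith
    have hf_mul : f * (ρ + σ - 5 / 8) ≤ -excess ρ σ τ := by unfold excess at *; linarith
    have hde : e * d ≤ e * (2 * (ρ + τ - 5 / 8)) := by gcongr <;> linarith
    have hfde : f * (d + e) ≤ f * (4 * (ρ + σ - 5 / 8)) := by gcongr <;> linarith
    linarith

lemma increments_pairSum_le (hστ : 5 / 8 ≤ σ + τ) (hτρ : 5 / 8 ≤ τ + ρ) (hρσ : 5 / 8 ≤ ρ + σ)
    (hd : d ∈ Set.Icc 0 (1 - ρ)) (he : e ∈ Set.Icc 0 (1 - σ)) (hf : f ∈ Set.Icc 0 (1 - τ))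
    (hρd : excess (ρ + d) σ τ ≤ 0) (hσe : excess ρ (σ + e) τ ≤ 0)
    (hτf : excess ρ σ (τ + f) ≤ 0) :
    d * e + e * f + f * d ≤ -6 * excess ρ σ τ := by
  wlog hle : σ ≤ ρ generalizing ρ σ d e
  · have := this (by linarith) (by linarith) (by linarith) he hd (excess_swap .. ▸ hσe)
      (excess_swap .. ▸ hρd) (excess_swap .. ▸ hτf) (le_of_not_ge hle)
    rw [excess_swap]
    linarith
  rcases le_total τ σ with hτσ | hστ'
  · exact increments_pairSum_le_of_ordered hle hτσ hστ hd he hf hσe hτf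
  rcases le_total τ ρ with hτρ' | hρτ
  · have := increments_pairSum_le_of_ordered hτρ' hστ' (by linarith) hd hf he
      (by unfold excess at *; linarith) (by unfold excess at *; linarith)
    unfold excess at *
    linarith
  · have := increments_pairSum_le_of_ordered hρτ hle (by linarith) hf hd he
      (by unfold excess at *; linarith) (by unfold excess at *; linarith)
    unfold excess at *
    linarith

lemma excess_le_of_add_le (hq : 0 ≤ q) (hr : 0 ≤ r) (h : q + r ≤ 5 / 8)
    (hpos : 0 < excess ((1 + p) / 2) ((1 + q) / 2) ((1 + r) / 2)) :
    excess p q r ≤ -7 / 36 := by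
  obtain ⟨s, hs⟩ : ∃ s, s = q + r := ⟨_, rfl⟩
  have hqr : q * r ≤ s ^ 2 / 4 := by rw [hs]; nlinarith [sq_nonneg (q - r)]
  have hmid : 0 < -3 / 4 + 3 / 4 * s + 3 / 4 * p + p * s + q * r := by
    rw [hs]; unfold excess at hpos; linarith
  have hexcess : excess p q r = p * s + q * r - 5 / 8 * (p + s) := by
    rw [hs]; unfold excess; ring
  by_contra! hlt
  rw [hexcess] at hlt
  -- These two multiples add up to an inequality without `p`.
  have hmid_mul : 0 ≤ (5 / 8 - s) * (-3 / 4 + 3 / 4 * s + 3 / 4 * p + p * s + q * r) :=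
    mul_nonneg (by linarith) hmid.le
  have hlt_mul : 0 < (3 / 4 + s) * (p * s + q * r - 5 / 8 * (p + s) + 7 / 36) :=
    mul_pos (by linarith) (by linarith)
  nlinarith [sq_nonneg (s - 1 / 2)]

lemma mixed_excess_sum_eq (x y z ρ σ τ : ℝ) :
    excess x y τ + excess x σ z + excess ρ y z =
      excess x y z - excess ρ σ τ + (excess x σ τ + excess ρ y τ + excess ρ σ z) := by
  unfold excess; ring

lemma mixed_excess_sum_eq_increments (x y z ρ σ τ : ℝ) :
    excess x y τ + excess x σ z + excess ρ y z =
      2 * (excess x σ τ + excess ρ y τ + excess ρ σ z) - 3 * excess ρ σ τ +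
        ((x - ρ) * (y - σ) + (y - σ) * (z - τ) + (z - τ) * (x - ρ)) := by
  unfold excess; ring

lemma mixed_excess_sum_le (hp : 0 ≤ p) (hq : 0 ≤ q) (hr : 0 ≤ r)
    (hpρ : p ≤ ρ) (hqσ : q ≤ σ) (hrτ : r ≤ τ) (hρx : ρ ≤ x) (hσy : σ ≤ y) (hτz : τ ≤ z)
    (hx : x ≤ 1) (hy : y ≤ 1) (hz : z ≤ 1)
    (hxστ : excess x σ τ ≤ 0) (hρyτ : excess ρ y τ ≤ 0) (hρσz : excess ρ σ z ≤ 0)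
    (hpos : 0 < excess ((1 + p) / 2) ((1 + q) / 2) ((1 + r) / 2)) :
    excess x y τ + excess x σ z + excess ρ y z ≤ -9 * excess p q r := by
  by_cases hpairs : 5 / 8 ≤ p + q ∧ 5 / 8 ≤ q + r ∧ 5 / 8 ≤ r + p
  · obtain ⟨hpq, hqr, hrp⟩ := hpairs
    have hmono : excess p q r ≤ excess ρ σ τ := excess_le_excess hpρ hqσ hrτ hpq hqr hrp
    have hinc := increments_pairSum_le (ρ := ρ) (σ := σ) (τ := τ) (d := x - ρ) (e := y - σ)
      (f := z - τ) (by linarith) (by linarith) (by linarith) ⟨by linarith, by linarith⟩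
      ⟨by linarith, by linarith⟩ ⟨by linarith, by linarith⟩ (by simpa) (by simpa) (by simpa)
    rw [mixed_excess_sum_eq_increments]
    linarith
  · have hpqr : excess p q r ≤ -7 / 36 := by
      by_cases hqr : q + r ≤ 5 / 8
      · exact excess_le_of_add_le hq hr hqr hpos
      by_cases hrp : r + p ≤ 5 / 8
      · rw [excess_rotate] at hpos ⊢
        exact excess_le_of_add_le hr hp hrp hpos
      · rw [← excess_rotate] at hpos ⊢
        exact excess_le_of_add_le hp hq (by grind) hpos
    have hupper : excess x y z ≤ 9 / 8 := excess_le_nine_eighths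
      ⟨by linarith, hx⟩ ⟨by linarith, hy⟩ ⟨by linarith, hz⟩
    have hlower : -5 / 8 ≤ excess ρ σ τ := neg_five_eighths_le_excess
      ⟨by linarith, by linarith⟩ ⟨by linarith, by linarith⟩ ⟨by linarith, by linarith⟩
    rw [mixed_excess_sum_eq]
    linarith

end MixedExcess

section Averaging

lemma expect_excess {G : Type*} [AddCommGroup G] [Fintype G] (α β γ : G → ℝ) :
    𝔼 i, 𝔼 j, excess (α i) (β j) (γ (-i - j)) = excess (𝔼 i, α i) (𝔼 i, β i) (𝔼 i, γ i) := by
  have expect_right (i : G) : 𝔼 j, γ (-i - j) = 𝔼 k, γ k :=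
    Fintype.expect_equiv (Equiv.subLeft (-i)) _ _ fun _ ↦ rfl
  have expect_left (j : G) : 𝔼 i, γ (-i - j) = 𝔼 k, γ k :=
    Fintype.expect_equiv ((Equiv.neg G).trans (Equiv.subRight j)) _ _ fun _ ↦ rfl
  have hβγ : 𝔼 i, 𝔼 j, β j * γ (-i - j) = (𝔼 i, β i) * 𝔼 i, γ i := by
    rw [expect_comm]
    simp only [← mul_expect, expect_left, expect_mul]
  simp only [excess, expect_sub_distrib, expect_add_distrib, ← mul_expect, ← expect_mul, hβγ,
    expect_right, Fintype.expect_const]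

lemma expect_range_eq_expect_zmod (m : ℕ) [NeZero m] (u : ℕ → ℝ) :
    𝔼 i ∈ range m, u i = 𝔼 i : ZMod m, u i.val := by
  obtain ⟨k, rfl⟩ := Nat.exists_eq_succ_of_ne_zero (NeZero.ne m)
  rw [expect_eq_sum_div_card, Fintype.expect_eq_sum_div_card, sum_range, card_range, ZMod.card]
  rfl

lemma expect_range_two_mul (m : ℕ) (u : ℕ → ℝ) :
    𝔼 i ∈ range (2 * m), u i = (𝔼 i ∈ range m, u i + 𝔼 i ∈ range m, u (m + i)) / 2 := by
  rcases m.eq_zero_or_pos with rfl | hm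
  · simp
  · simp only [expect_eq_sum_div_card, two_mul, sum_range_add, card_range]
    push_cast
    field_simp
    ring

lemma expect_mem_Icc {ι : Type*} {s : Finset ι} (hs : s.Nonempty) {u : ι → ℝ} {a b : ℝ}
    (hu : ∀ i ∈ s, u i ∈ Set.Icc a b) : 𝔼 i ∈ s, u i ∈ Set.Icc a b :=
  ⟨le_expect hs fun i hi ↦ (hu i hi).1, expect_le hs fun i hi ↦ (hu i hi).2⟩

lemma le_val_add_val_add_val {m : ℕ} [NeZero m] {i j : ZMod m} (hij : (i, j) ≠ 0) :
    m ≤ i.val + j.val + (-i - j).val := by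
  have hdvd : m ∣ i.val + j.val + (-i - j).val := by
    rw [← ZMod.natCast_eq_zero_iff]
    push_cast
    simp only [ZMod.natCast_val, ZMod.cast_id', id_eq]
    ring
  refine Nat.le_of_dvd (Nat.pos_of_ne_zero fun hzero ↦ hij ?_) hdvd
  simp only [Nat.add_eq_zero_iff, ZMod.val_eq_zero] at hzero
  simp [hzero]

variable {m : ℕ} [NeZero m] {α β γ : ℕ → ℝ}

lemma sq_mul_excess_expect_le
    (h : ∀ i < m, ∀ j < m, ∀ k < m, m ≤ i + j + k → excess (α i) (β j) (γ k) ≤ 0) :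
    (m : ℝ) ^ 2 * excess (𝔼 i ∈ range m, α i) (𝔼 i ∈ range m, β i) (𝔼 i ∈ range m, γ i) ≤
      excess (α 0) (β 0) (γ 0) := by
  let E : ZMod m × ZMod m → ℝ := fun ij ↦ excess (α ij.1.val) (β ij.2.val) (γ (-ij.1 - ij.2).val)
  have hsum : (m : ℝ) ^ 2 *
      excess (𝔼 i ∈ range m, α i) (𝔼 i ∈ range m, β i) (𝔼 i ∈ range m, γ i) = ∑ ij, E ij := by
    simp only [expect_range_eq_expect_zmod]
    rw [← expect_excess, ← Fintype.card_mul_expect, ← univ_product_univ, expect_product]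
    simp [E, ZMod.card, sq]
  have hneg (ij : ZMod m × ZMod m) (hij : ij ≠ 0) : E ij ≤ 0 :=
    h _ ij.1.val_lt _ ij.2.val_lt _ (-ij.1 - ij.2).val_lt (le_val_add_val_add_val hij)
  calc
    _ = ∑ ij, E ij := hsum
    _ ≤ E 0 := by
      rw [Fintype.sum_eq_add_sum_compl 0]
      have := sum_nonpos (s := {0}ᶜ) (f := E) (by simpa using hneg)
      linarith
    _ = excess (α 0) (β 0) (γ 0) := by simp [E]

lemma excess_expect_nonpos (h : ∀ i < m, ∀ j < m, ∀ k < m, excess (α i) (β j) (γ k) ≤ 0) :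
    excess (𝔼 i ∈ range m, α i) (𝔼 i ∈ range m, β i) (𝔼 i ∈ range m, γ i) ≤ 0 := by
  have hm := NeZero.pos m
  have hsq := (sq_mul_excess_expect_le fun i hi j hj k hk _ ↦ h i hi j hj k hk).trans
    (h 0 hm 0 hm 0 hm)
  exact nonpos_of_mul_nonpos_right hsq (by positivity)

end Averaging

section Sequences

lemma excess_midpoints_nonpos {N x y z ρ σ τ U₀ V₀ W₀ U₁ V₁ W₁ : ℝ} (hN : 9 ≤ N)
    (hU₀ : U₀ ∈ Set.Icc 0 1) (hV₀ : V₀ ∈ Set.Icc 0 1) (hW₀ : W₀ ∈ Set.Icc 0 1)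
    (hU₁ : U₁ ∈ Set.Icc 0 ρ) (hV₁ : V₁ ∈ Set.Icc 0 σ) (hW₁ : W₁ ∈ Set.Icc 0 τ)
    (hx : x ∈ Set.Icc ρ 1) (hy : y ∈ Set.Icc σ 1) (hz : z ∈ Set.Icc τ 1)
    (hxστ : excess x σ τ ≤ 0) (hρyτ : excess ρ y τ ≤ 0) (hρσz : excess ρ σ z ≤ 0)
    (hxyτ : N * excess U₀ V₀ W₁ ≤ excess x y τ) (hxσz : N * excess U₀ V₁ W₀ ≤ excess x σ z)
    (hρyz : N * excess U₁ V₀ W₀ ≤ excess ρ y z) (hρστ : excess U₁ V₁ W₁ ≤ 0) :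
    excess ((U₀ + U₁) / 2) ((V₀ + V₁) / 2) ((W₀ + W₁) / 2) ≤ 0 := by
  simp only [Set.mem_Icc] at hU₀ hV₀ hW₀ hU₁ hV₁ hW₁ hx hy hz
  by_contra! hpos
  have hpos_one : 0 < excess ((1 + U₁) / 2) ((1 + V₁) / 2) ((1 + W₁) / 2) :=
    excess_pos_of_le (by linarith) (by linarith) (by linarith) (by linarith) (by linarith)
      (by linarith) hpos
  have hmixed := mixed_excess_sum_le hU₁.1 hV₁.1 hW₁.1 hU₁.2 hV₁.2 hW₁.2 hx.1 hy.1 hz.1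
    hx.2 hy.2 hz.2 hxστ hρyτ hρσz hpos_one
  have hle : N * (4 * excess ((U₀ + U₁) / 2) ((V₀ + V₁) / 2) ((W₀ + W₁) / 2)) ≤ 0 :=
    calc
      _ = N * excess U₀ V₀ W₁ + N * excess U₀ V₁ W₀ + N * excess U₁ V₀ W₀ +
          N * excess U₁ V₁ W₁ := by rw [four_mul_excess_midpoints]; ring
      _ ≤ -9 * excess U₁ V₁ W₁ + 9 * excess U₁ V₁ W₁ := by
        have hlast : N * excess U₁ V₁ W₁ ≤ 9 * excess U₁ V₁ W₁ :=
          mul_le_mul_of_nonpos_right hN hρστ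
        linarith
      _ = 0 := by ring
  have hgt : 0 < N * (4 * excess ((U₀ + U₁) / 2) ((V₀ + V₁) / 2) ((W₀ + W₁) / 2)) := by positivity
  linarith

theorem excess_expect_antitone_nonpos {m : ℕ} (hm : 3 ≤ m) {u v w : ℕ → ℝ} (hu : Antitone u)
    (hv : Antitone v) (hw : Antitone w) (hu' : ∀ i, u i ∈ Set.Icc 0 1)
    (hv' : ∀ i, v i ∈ Set.Icc 0 1) (hw' : ∀ i, w i ∈ Set.Icc 0 1)
    (h : ∀ i < 2 * m, ∀ j < 2 * m, ∀ k < 2 * m, 2 * m ≤ i + j + k →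
      excess (u i) (v j) (w k) ≤ 0) :
    excess (𝔼 i ∈ range (2 * m), u i) (𝔼 i ∈ range (2 * m), v i) (𝔼 i ∈ range (2 * m), w i) ≤
      0 := by
  have : NeZero m := ⟨by omega⟩
  have hrange : (range m).Nonempty := by simp; omega
  have first_mem {s : ℕ → ℝ} (hs : ∀ i, s i ∈ Set.Icc 0 1) : 𝔼 i ∈ range m, s i ∈ Set.Icc 0 1 :=
    expect_mem_Icc hrange fun i _ ↦ hs i
  have second_mem {s : ℕ → ℝ} (hs : Antitone s) (hs' : ∀ i, s i ∈ Set.Icc 0 1) :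
      𝔼 i ∈ range m, s (m + i) ∈ Set.Icc 0 (s m) :=
    expect_mem_Icc hrange fun i _ ↦ ⟨(hs' _).1, hs (by omega)⟩
  have zero_mem {s : ℕ → ℝ} (hs : Antitone s) (hs' : ∀ i, s i ∈ Set.Icc 0 1) :
      s 0 ∈ Set.Icc (s m) 1 := ⟨hs m.zero_le, (hs' 0).2⟩
  simp only [expect_range_two_mul]
  refine excess_midpoints_nonpos (N := (m : ℝ) ^ 2)
    (by exact_mod_cast Nat.pow_le_pow_left hm 2)
    (first_mem hu') (first_mem hv') (first_mem hw')
    (second_mem hu hu') (second_mem hv hv') (second_mem hw hw')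
    (zero_mem hu hu') (zero_mem hv hv') (zero_mem hw hw')
    (h 0 (by omega) m (by omega) m (by omega) (by omega))
    (h m (by omega) 0 (by omega) m (by omega) (by omega))
    (h m (by omega) m (by omega) 0 (by omega) (by omega))
    (sq_mul_excess_expect_le fun i _ j _ k _ _ ↦ ?_)
    (sq_mul_excess_expect_le (β := fun j ↦ v (m + j)) fun i _ j _ k _ _ ↦ ?_)
    (sq_mul_excess_expect_le (α := fun i ↦ u (m + i)) fun i _ j _ k _ _ ↦ ?_)
    (excess_expect_nonpos fun i _ j _ k _ ↦ ?_)
  all_goals exact h _ (by omega) _ (by omega) _ (by omega) (by omega)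

end Sequences

section SortedValues

variable {ι : Type*} [Fintype ι]

/-- An enumeration of a finite type along which `f` decreases. -/
noncomputable def decreasingEnum (f : ι → ℝ) : Fin (Fintype.card ι) ≃ ι :=
  (Tuple.sort fun i ↦ -f ((Fintype.equivFin ι).symm i)).trans (Fintype.equivFin ι).symm

/-- The values of `f` in decreasing order, indexed from `0` and continued by `0`. -/
noncomputable def sortedValues (f : ι → ℝ) (i : ℕ) : ℝ :=
  if hi : i < Fintype.card ι then f (decreasingEnum f ⟨i, hi⟩) else 0

lemma antitone_comp_decreasingEnum (f : ι → ℝ) : Antitone (f ∘ decreasingEnum f) := by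
  intro i j hij
  have := Tuple.monotone_sort (fun i ↦ -f ((Fintype.equivFin ι).symm i)) hij
  simpa [decreasingEnum] using this

lemma sortedValues_val (f : ι → ℝ) (i : Fin (Fintype.card ι)) :
    sortedValues f i = f (decreasingEnum f i) := by
  simp [sortedValues]

lemma antitone_sortedValues {f : ι → ℝ} (hf : ∀ x, 0 ≤ f x) : Antitone (sortedValues f) := by
  intro i j hij
  unfold sortedValues
  split_ifs with hj hi hi
  · exact antitone_comp_decreasingEnum f hij
  · omega
  · exact hf _
  · exact le_rfl

lemma sortedValues_mem_Icc {f : ι → ℝ} (hf : ∀ x, f x ∈ Set.Icc 0 1) (i : ℕ) :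
    sortedValues f i ∈ Set.Icc 0 1 := by
  unfold sortedValues
  split_ifs
  · exact hf _
  · simp

lemma expect_sortedValues (f : ι → ℝ) :
    𝔼 i ∈ range (Fintype.card ι), sortedValues f i = 𝔼 x, f x := by
  rw [expect_eq_sum_div_card, Fintype.expect_eq_sum_div_card, card_range, sum_range]
  simp only [sortedValues_val, Equiv.sum_comp]

lemma exists_card_eq_sortedValues_le (f : ι → ℝ) {i : ℕ} (hi : i < Fintype.card ι) :
    ∃ s : Finset ι, #s = i + 1 ∧ ∀ x ∈ s, sortedValues f i ≤ f x := by
  refine ⟨(Iic ⟨i, hi⟩).map (decreasingEnum f).toEmbedding, by simp, ?_⟩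
  simp only [mem_map, mem_Iic, Equiv.coe_toEmbedding, forall_exists_index, and_imp,
    forall_apply_eq_imp_iff₂]
  intro j hj
  exact (sortedValues_val f ⟨i, hi⟩).trans_le (antitone_comp_decreasingEnum f hj)

end SortedValues

section CauchyDavenport

variable {p : ℕ} [Fact p.Prime]

lemma add_add_eq_univ_of_le_card {A B C : Finset (ZMod p)} (hA : A.Nonempty) (hB : B.Nonempty)
    (hC : C.Nonempty) (hcard : p + 2 ≤ #A + #B + #C) : A + B + C = univ := by
  have hAB := ZMod.cauchy_davenport Fact.out hA hB
  have hABC := ZMod.cauchy_davenport Fact.out (hA.add hB) hC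
  have hA_pos := hA.card_pos
  have hB_pos := hB.card_pos
  have hC_pos := hC.card_pos
  refine eq_univ_of_card _ ((card_le_univ _).antisymm ?_)
  rw [ZMod.card]
  omega

lemma exists_units_sortedValues_le (f₁ f₂ f₃ : (ZMod p)ˣ → ℝ) {i j k : ℕ} (hi : i < p - 1)
    (hj : j < p - 1) (hk : k < p - 1) (hijk : p - 1 ≤ i + j + k) (x : ZMod p) :
    ∃ a₁ a₂ a₃ : (ZMod p)ˣ, x = a₁ + a₂ + a₃ ∧
      sortedValues f₁ i ≤ f₁ a₁ ∧ sortedValues f₂ j ≤ f₂ a₂ ∧ sortedValues f₃ k ≤ f₃ a₃ := by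
  rw [← ZMod.card_units p] at hi hj hk
  obtain ⟨A, hA, hfA⟩ := exists_card_eq_sortedValues_le f₁ hi
  obtain ⟨B, hB, hfB⟩ := exists_card_eq_sortedValues_le f₂ hj
  obtain ⟨C, hC, hfC⟩ := exists_card_eq_sortedValues_le f₃ hk
  let val : (ZMod p)ˣ ↪ ZMod p := ⟨Units.val, Units.val_injective⟩
  have hABC : A.map val + B.map val + C.map val = univ := by
    refine add_add_eq_univ_of_le_card ?_ ?_ ?_ ?_ <;>
      simp only [← card_pos, card_map] <;> omega
  obtain ⟨_, hab, c, hc, rfl⟩ := mem_add.1 (hABC ▸ mem_univ x)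
  obtain ⟨a, ha, b, hb, rfl⟩ := mem_add.1 hab
  simp only [mem_map] at ha hb hc
  obtain ⟨a₁, ha₁, rfl⟩ := ha
  obtain ⟨a₂, ha₂, rfl⟩ := hb
  obtain ⟨a₃, ha₃, rfl⟩ := hc
  exact ⟨a₁, a₂, a₃, rfl, hfA a₁ ha₁, hfB a₂ ha₂, hfC a₃ ha₃⟩

end CauchyDavenport

lemma expect_units_prod {R S : Type*} [Monoid R] [Monoid S] [Fintype Rˣ] [Fintype Sˣ]
    [Fintype (R × S)ˣ] (f : (R × S)ˣ → ℝ) :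
    𝔼 a, f a = 𝔼 b : Rˣ, 𝔼 c : Sˣ, f (MulEquiv.prodUnits.symm (b, c)) := by
  rw [← expect_product' univ univ fun b c ↦ f (MulEquiv.prodUnits.symm (b, c)), univ_product_univ]
  exact Fintype.expect_equiv MulEquiv.prodUnits.toEquiv _ _ fun a ↦ by simp

/-- If the averages of three functions `Rˣ → [0, 1]` satisfy `K`, then every element of `R` is a sum
of three units at which the respective values of the functions satisfy `L`. -/
def UnitSumTransfer (R : Type*) [CommRing R] [Fintype Rˣ] (K L : ℝ → ℝ → ℝ → Prop) : Prop :=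
  ∀ f₁ f₂ f₃ : Rˣ → ℝ, (∀ a, f₁ a ∈ Set.Icc 0 1) → (∀ a, f₂ a ∈ Set.Icc 0 1) →
    (∀ a, f₃ a ∈ Set.Icc 0 1) → K (𝔼 a, f₁ a) (𝔼 a, f₂ a) (𝔼 a, f₃ a) →
    ∀ x : R, ∃ a₁ a₂ a₃ : Rˣ, x = a₁ + a₂ + a₃ ∧ L (f₁ a₁) (f₂ a₂) (f₃ a₃)

namespace UnitSumTransfer

variable {R S : Type*} [CommRing R] [CommRing S] [Fintype Rˣ] {K L M : ℝ → ℝ → ℝ → Prop}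

lemma congr [Fintype Sˣ] (e : R ≃+* S) (h : UnitSumTransfer R K L) : UnitSumTransfer S K L := by
  intro f₁ f₂ f₃ hf₁ hf₂ hf₃ hK x
  let e' : Rˣ ≃ Sˣ := (Units.mapEquiv e.toMulEquiv).toEquiv
  have expect_comp (f : Sˣ → ℝ) : 𝔼 a, f (e' a) = 𝔼 a, f a :=
    Fintype.expect_equiv e' _ _ fun _ ↦ rfl
  obtain ⟨a₁, a₂, a₃, hx, hL⟩ := h (f₁ ∘ e') (f₂ ∘ e') (f₃ ∘ e') (fun _ ↦ hf₁ _) (fun _ ↦ hf₂ _)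
    (fun _ ↦ hf₃ _) (by simpa only [Function.comp_apply, expect_comp] using hK) (e.symm x)
  refine ⟨e' a₁, e' a₂, e' a₃, ?_, hL⟩
  rw [RingEquiv.symm_apply_eq, map_add, map_add] at hx
  exact hx

lemma prod [Fintype Sˣ] [Fintype (R × S)ˣ] (hR : UnitSumTransfer R K L)
    (hS : UnitSumTransfer S L M) : UnitSumTransfer (R × S) K M := by
  intro f₁ f₂ f₃ hf₁ hf₂ hf₃ hK x
  simp only [expect_units_prod] at hK
  obtain ⟨b₁, b₂, b₃, hb, hL⟩ := hR _ _ _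
    (fun _ ↦ expect_mem_Icc univ_nonempty fun _ _ ↦ hf₁ _)
    (fun _ ↦ expect_mem_Icc univ_nonempty fun _ _ ↦ hf₂ _)
    (fun _ ↦ expect_mem_Icc univ_nonempty fun _ _ ↦ hf₃ _) hK x.1
  obtain ⟨c₁, c₂, c₃, hc, hM⟩ := hS _ _ _ (fun _ ↦ hf₁ _) (fun _ ↦ hf₂ _) (fun _ ↦ hf₃ _) hL x.2
  exact ⟨_, _, _, Prod.ext hb hc, hM⟩

lemma of_prod [Finite Sˣ] [Fintype (R × S)ˣ] (h : UnitSumTransfer (R × S) K L) :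
    UnitSumTransfer R K L := by
  intro f₁ f₂ f₃ hf₁ hf₂ hf₃ hK x
  have := Fintype.ofFinite Sˣ
  let fst : (R × S)ˣ → Rˣ := fun a ↦ (MulEquiv.prodUnits a).1
  have expect_fst (f : Rˣ → ℝ) : 𝔼 a, f (fst a) = 𝔼 b, f b := by
    rw [expect_units_prod]
    simp [fst]
  obtain ⟨a₁, a₂, a₃, hx, hL⟩ := h (f₁ ∘ fst) (f₂ ∘ fst) (f₃ ∘ fst) (fun _ ↦ hf₁ _)
    (fun _ ↦ hf₂ _) (fun _ ↦ hf₃ _) (by simpa only [Function.comp_apply, expect_fst] using hK)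
    (x, 0)
  exact ⟨fst a₁, fst a₂, fst a₃, congrArg Prod.fst hx, hL⟩

lemma of_subsingleton [Subsingleton R] : UnitSumTransfer R K K := by
  intro f₁ f₂ f₃ _ _ _ hK x
  have expect_eq (f : Rˣ → ℝ) : 𝔼 a, f a = f 1 := by
    simp [Subsingleton.elim _ (1 : Rˣ)]
  refine ⟨1, 1, 1, Subsingleton.elim _ _, ?_⟩
  simpa only [expect_eq] using hK

variable {m n : ℕ} [NeZero m] [NeZero n]

lemma zmod_mul (hmn : m.Coprime n) (hm : UnitSumTransfer (ZMod m) K L)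
    (hn : UnitSumTransfer (ZMod n) L M) : UnitSumTransfer (ZMod (m * n)) K M :=
  (hm.prod hn).congr (ZMod.chineseRemainder hmn).symm

lemma of_zmod_mul (hmn : m.Coprime n) (h : UnitSumTransfer (ZMod (m * n)) K L) :
    UnitSumTransfer (ZMod m) K L :=
  (h.congr (ZMod.chineseRemainder hmn)).of_prod

end UnitSumTransfer

/-- The condition on three averages that is preserved at primes `p ≥ 7`. -/
def PosExcess (a b c : ℝ) : Prop := 0 < excess a b c

lemma unitSumTransfer_zmod_prime {p : ℕ} [Fact p.Prime] (hp : 7 ≤ p) :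
    UnitSumTransfer (ZMod p) PosExcess PosExcess := by
  intro f₁ f₂ f₃ hf₁ hf₂ hf₃ hpos x
  by_contra! hnone
  obtain ⟨m, hm⟩ := (Fact.out : p.Prime).even_sub_one (by omega)
  rw [← two_mul] at hm
  have hcard : Fintype.card (ZMod p)ˣ = 2 * m := (ZMod.card_units p).trans hm
  refine hpos.not_ge ?_
  simp only [← expect_sortedValues, hcard]
  refine excess_expect_antitone_nonpos (by omega) (antitone_sortedValues fun a ↦ (hf₁ a).1)
    (antitone_sortedValues fun a ↦ (hf₂ a).1) (antitone_sortedValues fun a ↦ (hf₃ a).1)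
    (sortedValues_mem_Icc hf₁) (sortedValues_mem_Icc hf₂) (sortedValues_mem_Icc hf₃)
    fun i hi j hj k hk hijk ↦ ?_
  by_contra! hsorted
  obtain ⟨a₁, a₂, a₃, hx, h₁, h₂, h₃⟩ := exists_units_sortedValues_le f₁ f₂ f₃
    (hi.trans_eq hm.symm) (hj.trans_eq hm.symm) (hk.trans_eq hm.symm) (hm.trans_le hijk) x
  exact hnone a₁ a₂ a₃ hx <| excess_pos_of_le (sortedValues_mem_Icc hf₁ i).1
    (sortedValues_mem_Icc hf₂ j).1 (sortedValues_mem_Icc hf₃ k).1 h₁ h₂ h₃ hsorted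

lemma unitSumTransfer_zmod_of_coprime_thirty {m : ℕ} [hm₀ : NeZero m] (hsf : Squarefree m)
    (hm : m.Coprime 30) : UnitSumTransfer (ZMod m) PosExcess PosExcess := by
  induction m using induction_on_primes generalizing hm₀ with
  | zero => exact absurd rfl hm₀.ne
  | one => exact UnitSumTransfer.of_subsingleton
  | prime_mul p m hp ih =>
    have : Fact p.Prime := ⟨hp⟩
    have : NeZero m := ⟨right_ne_zero_of_mul hm₀.ne⟩
    obtain ⟨hpm, -, hsf_m⟩ := Nat.squarefree_mul_iff.1 hsf
    have hp7 : 7 ≤ p := by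
      by_contra! hlt
      have hp30 := Nat.Coprime.coprime_mul_right hm
      interval_cases p <;> revert hp hp30 <;> decide
    exact (unitSumTransfer_zmod_prime hp7).zmod_mul hpm (ih hsf_m hm.coprime_mul_left)

/-- The condition that leads from `ℤ/3ℤ` to `ℤ/5ℤ`. The last clause is there because three functions
on `(ℤ/5ℤ)ˣ` without a suitable triple of values can have averages with a sum in `(3/2, 13/8]`, but
then one of these averages is at most `1/8`. -/
def FiveReady (a b c : ℝ) : Prop :=
  0 < a ∧ 0 < b ∧ 0 < c ∧ 3 / 2 < a + b + c ∧
    (13 / 8 < a + b + c ∨ 1 / 8 < a ∧ 1 / 8 < b ∧ 1 / 8 < c)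

section ModThree

variable {f : Fin 3 → (ZMod 3)ˣ → ℝ} {x : ZMod 3} {t : Fin 3 → (ZMod 3)ˣ}

lemma expect_units_zmod_three (g : (ZMod 3)ˣ → ℝ) (e : (ZMod 3)ˣ) :
    𝔼 a, g a = (g e + g (-e)) / 2 := by
  have huniv : (univ : Finset (ZMod 3)ˣ) = {e, -e} := by revert e; decide
  have hne : e ≠ -e := by revert e; decide
  rw [huniv, expect_eq_sum_div_card, sum_pair hne, card_pair hne, Nat.cast_two]

lemma exists_sum_units_zmod_three (x : ZMod 3) (i : Fin 3) (e : (ZMod 3)ˣ) :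
    ∃ t : Fin 3 → (ZMod 3)ˣ, ∑ k, (t k : ZMod 3) = x ∧ t i = e := by
  revert x i e
  decide

lemma excess_nonpos_of_total_le (hf : ∀ i e, f i e ∈ Set.Icc 0 1) (t : Fin 3 → (ZMod 3)ˣ)
    (htotal : ∑ k, f k (t k) + ∑ k, f k (-t k) ≤ 15 / 4) :
    excess (𝔼 e, f 0 e) (𝔼 e, f 1 e) (𝔼 e, f 2 e) ≤ 0 := by
  refine excess_nonpos_of_sum_le (expect_nonneg fun _ _ ↦ (hf 0 _).1)
    (expect_nonneg fun _ _ ↦ (hf 1 _).1) (expect_nonneg fun _ _ ↦ (hf 2 _).1) ?_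
  simp only [Fin.sum_univ_three] at htotal
  rw [expect_units_zmod_three (f 0) (t 0), expect_units_zmod_three (f 1) (t 1),
    expect_units_zmod_three (f 2) (t 2)]
  linarith

lemma excess_nonpos_of_solution_sums_le (hf : ∀ i e, f i e ∈ Set.Icc 0 1)
    (h : ∀ t : Fin 3 → (ZMod 3)ˣ, ∑ k, (t k : ZMod 3) = x → ∑ k, f k (t k) ≤ 3 / 2) :
    excess (𝔼 e, f 0 e) (𝔼 e, f 1 e) (𝔼 e, f 2 e) ≤ 0 := by
  have three_terms (s : (ZMod 3)ˣ) (hs : s = x) :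
      2 * ∑ k, f k s + ∑ k, f k (-s) ≤ 9 / 2 := by
    have h₀ := h ![-s, s, s] (by subst hs; simp [Fin.sum_univ_three])
    have h₁ := h ![s, -s, s] (by subst hs; simp [Fin.sum_univ_three])
    have h₂ := h ![s, s, -s] (by subst hs; simp [Fin.sum_univ_three])
    simp only [Fin.sum_univ_three, Matrix.cons_val] at h₀ h₁ h₂ ⊢
    linarith
  have sum_le_three (s : (ZMod 3)ˣ) : ∑ k, f k s ≤ 3 := by
    simpa using sum_le_card_nsmul univ (f · s) 1 fun k _ ↦ (hf k s).2
  by_cases hx : x = 0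
  · have hthree (s : (ZMod 3)ˣ) : ∑ _k : Fin 3, (s : ZMod 3) = 0 := by revert s; decide
    refine excess_nonpos_of_total_le hf (fun _ ↦ 1) ?_
    have hpos := h (fun _ ↦ 1) ((hthree 1).trans hx.symm)
    have hneg := h (fun _ ↦ -1) ((hthree (-1)).trans hx.symm)
    linarith
  · obtain ⟨s, rfl⟩ : IsUnit x := isUnit_iff_ne_zero.2 hx
    refine excess_nonpos_of_total_le hf (fun _ ↦ s) ?_
    linarith [three_terms s rfl, sum_le_three (-s)]

lemma excess_nonpos_of_entry_le (hf : ∀ i e, f i e ∈ Set.Icc 0 1) {i : Fin 3}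
    (hentry : f i (-t i) ≤ 1 / 8) (hsum : ∑ k, f k (t k) ≤ 13 / 8) :
    excess (𝔼 e, f 0 e) (𝔼 e, f 1 e) (𝔼 e, f 2 e) ≤ 0 := by
  refine excess_nonpos_of_total_le hf t ?_
  have hrest : ∑ k ∈ univ.erase i, f k (-t k) ≤ 2 := by
    simpa using sum_le_card_nsmul (univ.erase i) (fun k ↦ f k (-t k)) 1 fun k _ ↦ (hf k _).2
  rw [← add_sum_erase univ (fun k ↦ f k (-t k)) (mem_univ i)]
  linarith

lemma excess_nonpos_of_two_zeros (hf : ∀ i e, f i e ∈ Set.Icc 0 1) {i j : Fin 3} {e e' : (ZMod 3)ˣ}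
    (he : f i e = 0) (he' : f j e' = 0) (hne : j = i → e' = -e) :
    excess (𝔼 e, f 0 e) (𝔼 e, f 1 e) (𝔼 e, f 2 e) ≤ 0 := by
  let g : Fin 3 → ℝ := fun k ↦ 𝔼 a, f k a
  have hg (k : Fin 3) : g k ∈ Set.Icc 0 1 := expect_mem_Icc univ_nonempty fun a _ ↦ hf k a
  have half_mem {k : Fin 3} {a : (ZMod 3)ˣ} (h : f k a = 0) : g k ∈ Set.Icc 0 (1 / 2) := by
    refine ⟨(hg k).1, ?_⟩
    simp only [g, expect_units_zmod_three _ a]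
    linarith [(hf k (-a)).2]
  rcases eq_or_ne j i with rfl | hij
  · have hzero : g j = 0 := by
      simp only [g, expect_units_zmod_three _ e, he, ← hne rfl, he', add_zero, zero_div]
    obtain ⟨π, hπ⟩ : ∃ π : Equiv.Perm (Fin 3), π 0 = j := ⟨Equiv.swap 0 j, by simp⟩
    rw [← excess_comp_perm g π, hπ, hzero]
    exact excess_zero_nonpos (hg _) (hg _)
  · obtain ⟨π, hπi, hπj⟩ : ∃ π : Equiv.Perm (Fin 3), π 1 = i ∧ π 2 = j := by
      clear he he' hne
      revert i j
      decide
    rw [← excess_comp_perm g π, hπi, hπj]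
    exact excess_nonpos_of_le_half (hg _) (half_mem he) (half_mem he')

lemma excess_nonpos_of_forall_not_fiveReady (hf : ∀ i e, f i e ∈ Set.Icc 0 1)
    (h : ∀ t : Fin 3 → (ZMod 3)ˣ, ∑ k, (t k : ZMod 3) = x →
      ¬ FiveReady (f 0 (t 0)) (f 1 (t 1)) (f 2 (t 2))) :
    excess (𝔼 e, f 0 e) (𝔼 e, f 1 e) (𝔼 e, f 2 e) ≤ 0 := by
  by_contra! hpos
  have zero_of_small {i : Fin 3} {e : (ZMod 3)ˣ} (he : f i e ≤ 1 / 8) :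
      ∃ j e', f j e' = 0 ∧ (j = i → e' = -e) := by
    obtain ⟨t, ht, hti⟩ := exists_sum_units_zmod_three x i (-e)
    have hsum : 13 / 8 < ∑ k, f k (t k) := by
      by_contra! hsum
      exact hpos.not_ge (excess_nonpos_of_entry_le hf (i := i) (by simpa [hti] using he) hsum)
    suffices ∃ j, f j (t j) = 0 by
      obtain ⟨j, hj⟩ := this
      exact ⟨j, t j, hj, fun hji ↦ hji ▸ hti⟩
    by_contra! hne
    have hentry (k : Fin 3) : 0 < f k (t k) := (hf k (t k)).1.lt_of_ne' (hne k)
    rw [Fin.sum_univ_three] at hsum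
    exact h t ht ⟨hentry 0, hentry 1, hentry 2, by linarith, .inl hsum⟩
  obtain ⟨i, e, hsmall⟩ : ∃ i e, f i e ≤ 1 / 8 := by
    by_contra! hlarge
    refine hpos.not_ge (excess_nonpos_of_solution_sums_le (x := x) hf fun t ht ↦ ?_)
    by_contra! hsum
    rw [Fin.sum_univ_three] at hsum
    have hentry (k : Fin 3) : 0 < f k (t k) := by linarith [hlarge k (t k)]
    exact h t ht ⟨hentry 0, hentry 1, hentry 2, hsum,
      .inr ⟨hlarge 0 _, hlarge 1 _, hlarge 2 _⟩⟩
  obtain ⟨j, e', hzero, -⟩ := zero_of_small hsmall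
  obtain ⟨k, e'', hzero', hne⟩ := zero_of_small (hzero.trans_le (by norm_num))
  exact hpos.not_ge (excess_nonpos_of_two_zeros hf hzero hzero' hne)

lemma unitSumTransfer_zmod_three : UnitSumTransfer (ZMod 3) PosExcess FiveReady := by
  intro f₁ f₂ f₃ hf₁ hf₂ hf₃ hpos x
  by_contra! hnone
  refine hpos.not_ge (excess_nonpos_of_forall_not_fiveReady (f := ![f₁, f₂, f₃]) (x := x) ?_
    fun t ht ↦ hnone (t 0) (t 1) (t 2) ?_)
  · intro i
    fin_cases i
    exacts [hf₁, hf₂, hf₃]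
  · rw [← ht, Fin.sum_univ_three]

end ModThree

/-- The condition on three values in the conclusion of the theorem. -/
def LargePosTriple (a b c : ℝ) : Prop := 0 < a * b * c ∧ 3 / 2 < a + b + c

lemma LargePosTriple.mono {a b c a' b' c' : ℝ} (ha : 0 ≤ a) (hb : 0 ≤ b) (hc : 0 ≤ c)
    (haa' : a ≤ a') (hbb' : b ≤ b') (hcc' : c ≤ c') (h : LargePosTriple a b c) :
    LargePosTriple a' b' c' := by
  have ha' := ha.trans haa'
  have hb' := hb.trans hbb'
  exact ⟨h.1.trans_le (by gcongr), h.2.trans_le (by gcongr)⟩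

section ModFive

variable {a b c : ℕ → ℝ}

lemma totals_le_of_forall_pos_imp_le (ha : Antitone a) (hb : Antitone b) (hc : Antitone c)
    (ha' : ∀ i, a i ∈ Set.Icc 0 1) (hb' : ∀ i, b i ∈ Set.Icc 0 1) (hc' : ∀ i, c i ∈ Set.Icc 0 1)
    (ha₀ : 0 < a 0) (hb₀ : 0 < b 0) (hc₀ : 0 < c 0)
    (h : ∀ i < 4, ∀ j < 4, ∀ k < 4, 4 ≤ i + j + k → 0 < a i → 0 < b j → 0 < c k →
      a i + b j + c k ≤ 3 / 2) :
    ∑ i ∈ range 4, a i + ∑ i ∈ range 4, b i + ∑ i ∈ range 4, c i ≤ 13 / 2 ∧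
      (1 / 2 < ∑ i ∈ range 4, a i → 1 / 2 < ∑ i ∈ range 4, b i → 1 / 2 < ∑ i ∈ range 4, c i →
        ∑ i ∈ range 4, a i + ∑ i ∈ range 4, b i + ∑ i ∈ range 4, c i ≤ 6) := by
  have chain {s : ℕ → ℝ} (hs : Antitone s) (hs' : ∀ i, s i ∈ Set.Icc 0 1) :
      s 0 ≤ 1 ∧ s 1 ≤ s 0 ∧ s 2 ≤ s 1 ∧ s 3 ≤ s 2 ∧ 0 ≤ s 3 :=
    ⟨(hs' 0).2, hs (by norm_num), hs (by norm_num), hs (by norm_num), (hs' 3).1⟩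
  have a_chain := chain ha ha'
  have b_chain := chain hb hb'
  have c_chain := chain hc hc'
  have bound (i j k : ℕ) (hijk : i < 4 ∧ j < 4 ∧ k < 4 ∧ 4 ≤ i + j + k) :=
    h i hijk.1 j hijk.2.1 k hijk.2.2.1 hijk.2.2.2
  have h022 := bound 0 2 2 (by decide)
  have h202 := bound 2 0 2 (by decide)
  have h220 := bound 2 2 0 (by decide)
  have h112 := bound 1 1 2 (by decide)
  have h121 := bound 1 2 1 (by decide)
  have h211 := bound 2 1 1 (by decide)
  have h013 := bound 0 1 3 (by decide)
  have h031 := bound 0 3 1 (by decide)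
  have h103 := bound 1 0 3 (by decide)
  have h130 := bound 1 3 0 (by decide)
  have h301 := bound 3 0 1 (by decide)
  have h310 := bound 3 1 0 (by decide)
  simp only [sum_range_succ, sum_range_zero]
  clear bound h ha hb hc ha' hb' hc' chain
  -- Once it is known which of the twelve entries vanish, both bounds are linear consequences.
  grind

lemma not_fiveReady_expect_antitone (ha : Antitone a) (hb : Antitone b) (hc : Antitone c)
    (ha' : ∀ i, a i ∈ Set.Icc 0 1) (hb' : ∀ i, b i ∈ Set.Icc 0 1) (hc' : ∀ i, c i ∈ Set.Icc 0 1)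
    (h : ∀ i < 4, ∀ j < 4, ∀ k < 4, 4 ≤ i + j + k → ¬ LargePosTriple (a i) (b j) (c k)) :
    ¬ FiveReady (𝔼 i ∈ range 4, a i) (𝔼 i ∈ range 4, b i) (𝔼 i ∈ range 4, c i) := by
  rintro ⟨ha_pos, hb_pos, hc_pos, hsum, hcases⟩
  have head_pos {s : ℕ → ℝ} (hs : Antitone s) (hpos : 0 < 𝔼 i ∈ range 4, s i) : 0 < s 0 :=
    hpos.trans_le (expect_le (by simp) fun i _ ↦ hs i.zero_le)
  have hle : ∀ i < 4, ∀ j < 4, ∀ k < 4, 4 ≤ i + j + k → 0 < a i → 0 < b j → 0 < c k →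
      a i + b j + c k ≤ 3 / 2 := fun i hi j hj k hk hijk hai hbj hck ↦
    not_lt.1 fun hlt ↦ h i hi j hj k hk hijk ⟨mul_pos (mul_pos hai hbj) hck, hlt⟩
  obtain ⟨htotal, htotal_of_half⟩ := totals_le_of_forall_pos_imp_le ha hb hc ha' hb' hc'
    (head_pos ha ha_pos) (head_pos hb hb_pos) (head_pos hc hc_pos) hle
  simp only [expect_eq_sum_div_card, card_range, Nat.cast_ofNat] at hsum hcases
  rcases hcases with hlarge | ⟨ha_half, hb_half, hc_half⟩
  · linarith
  · linarith [htotal_of_half (by linarith) (by linarith) (by linarith)]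

end ModFive

lemma unitSumTransfer_zmod_five : UnitSumTransfer (ZMod 5) FiveReady LargePosTriple := by
  intro f₁ f₂ f₃ hf₁ hf₂ hf₃ hready x
  by_contra! hnone
  have : Fact (Nat.Prime 5) := ⟨by norm_num⟩
  have hcard : Fintype.card (ZMod 5)ˣ = 4 := ZMod.card_units 5
  simp only [← expect_sortedValues, hcard] at hready
  refine not_fiveReady_expect_antitone (antitone_sortedValues fun a ↦ (hf₁ a).1)
    (antitone_sortedValues fun a ↦ (hf₂ a).1) (antitone_sortedValues fun a ↦ (hf₃ a).1)
    (sortedValues_mem_Icc hf₁) (sortedValues_mem_Icc hf₂) (sortedValues_mem_Icc hf₃)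
    (fun i hi j hj k hk hijk hsorted ↦ ?_) hready
  obtain ⟨a₁, a₂, a₃, hx, h₁, h₂, h₃⟩ := exists_units_sortedValues_le f₁ f₂ f₃ hi hj hk hijk x
  exact hnone a₁ a₂ a₃ hx <| hsorted.mono (sortedValues_mem_Icc hf₁ i).1
    (sortedValues_mem_Icc hf₂ j).1 (sortedValues_mem_Icc hf₃ k).1 h₁ h₂ h₃

lemma unitSumTransfer_zmod_fifteen : UnitSumTransfer (ZMod (3 * 5)) PosExcess LargePosTriple :=
  unitSumTransfer_zmod_three.zmod_mul (by norm_num) unitSumTransfer_zmod_five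

lemma exists_dvd_coprime_mul_eq_mul {m n : ℕ} (hm : Squarefree m) (hn : Squarefree n) :
    ∃ m' n', m' ∣ m ∧ m'.Coprime n ∧ m.Coprime n' ∧ m * n' = m' * n := by
  have hdm := Nat.gcd_dvd_left m n
  have hdn := Nat.gcd_dvd_right m n
  refine ⟨m / m.gcd n, n / m.gcd n, Nat.div_dvd_of_dvd hdm,
    Nat.coprime_div_gcd_of_squarefree hm hn.ne_zero, ?_, ?_⟩
  · rw [Nat.gcd_comm]
    exact (Nat.coprime_div_gcd_of_squarefree hn hm.ne_zero).symm
  · rw [Nat.div_mul_right_comm hdm, Nat.mul_div_assoc m hdn]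

lemma unitSumTransfer_zmod_of_odd {m : ℕ} [NeZero m] (hodd : Odd m) (hsf : Squarefree m) :
    UnitSumTransfer (ZMod m) PosExcess LargePosTriple := by
  have hfifteen : Squarefree (3 * 5) := Nat.squarefree_mul_iff.2
    ⟨by norm_num, Nat.prime_three.prime.squarefree, Nat.prime_five.prime.squarefree⟩
  obtain ⟨n, k, hnm, hn, hmk, heq⟩ := exists_dvd_coprime_mul_eq_mul hsf hfifteen
  have : NeZero n := ⟨ne_zero_of_dvd_ne_zero (NeZero.ne m) hnm⟩
  have : NeZero k := ⟨right_ne_zero_of_mul (heq ▸ mul_ne_zero (NeZero.ne n) hfifteen.ne_zero)⟩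
  have hn_thirty : n.Coprime (2 * (3 * 5)) :=
    (hodd.coprime_two_right.coprime_dvd_left hnm).mul_right hn
  have hmul : UnitSumTransfer (ZMod (n * (3 * 5))) PosExcess LargePosTriple :=
    (unitSumTransfer_zmod_of_coprime_thirty (hsf.squarefree_of_dvd hnm) hn_thirty).zmod_mul hn
      unitSumTransfer_zmod_fifteen
  exact (hmul.congr (ZMod.ringEquivCongr heq.symm)).of_zmod_mul hmk

theorem stmt4_general (m : ℕ) [NeZero m] (hodd : Odd m) (hsf : Squarefree m)
    (f₁ f₂ f₃ : (ZMod m)ˣ → ℝ) (hf₁ : ∀ x, f₁ x ∈ Set.Icc 0 1) (hf₂ : ∀ x, f₂ x ∈ Set.Icc 0 1)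
    (hf₃ : ∀ x, f₃ x ∈ Set.Icc 0 1)
    (h : 5 / 8 * (𝔼 x, f₁ x + 𝔼 x, f₂ x + 𝔼 x, f₃ x) <
      (𝔼 x, f₁ x) * (𝔼 x, f₂ x) + (𝔼 x, f₂ x) * (𝔼 x, f₃ x) + (𝔼 x, f₃ x) * (𝔼 x, f₁ x)) :
    ∀ x : ZMod m, ∃ a₁ a₂ a₃ : (ZMod m)ˣ, x = a₁ + a₂ + a₃ ∧
      0 < f₁ a₁ * f₂ a₂ * f₃ a₃ ∧ 3 / 2 < f₁ a₁ + f₂ a₂ + f₃ a₃ :=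
  unitSumTransfer_zmod_of_odd hodd hsf f₁ f₂ f₃ hf₁ hf₂ hf₃ (sub_pos.2 h)

/-- Proposition: if `m` is an odd squarefree positive integer and `f : (ℤ/mℤ)* → [0,1]` has
average greater than `5/8`, then every `x ∈ ℤ/mℤ` can be written as `x = a₁ + a₂ + a₃` with
`a₁, a₂, a₃` units, `f(a₁)f(a₂)f(a₃) > 0` and `f(a₁) + f(a₂) + f(a₃) > 3/2`. -/
theorem stmt4 (m : ℕ) [NeZero m] (hodd : Odd m) (hsf : Squarefree m)
    (f : (ZMod m)ˣ → ℝ) (hf : ∀ x, f x ∈ Set.Icc (0 : ℝ) 1)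
    (hsum : ∑ x : (ZMod m)ˣ, f x > 5 / 8 * (Nat.totient m : ℝ)) :
    ∀ x : ZMod m, ∃ a₁ a₂ a₃ : (ZMod m)ˣ,
      x = (a₁ : ZMod m) + (a₂ : ZMod m) + (a₃ : ZMod m) ∧
      f a₁ * f a₂ * f a₃ > 0 ∧ f a₁ + f a₂ + f a₃ > 3 / 2 := by
  have havg : 5 / 8 < 𝔼 x, f x := by
    have hcard : (0 : ℝ) < m.totient := by exact_mod_cast Nat.totient_pos.2 (NeZero.pos m)
    rwa [Fintype.expect_eq_sum_div_card, ZMod.card_units_eq_totient, lt_div_iff₀ hcard]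
  exact stmt4_general m hodd hsf f f f hf hf hf (by nlinarith)
end

section
/- Let n ≥ 6 be an even positive integer and let a₀ ≥ a₁ ≥ … ≥ a_{n−1} be a decreasing sequence of real numbers in [0,1] with average A = (1/n)∑_{j=0}^{n−1} a_j. Suppose that for all triples (i,j,k) with 0 ≤ i, j, k ≤ n−1 and i + j + k ≥ n one has a_i a_j + a_j a_k + a_k a_i ≤ (5/8)(a_i + a_j + a_k). Then A ≤ 5/8. -/
/-!
Let `e i = a i - c` be the deviations from `c = 5 / 8`. The hypothesis on a triple becomes
`e i * e j + e j * e k + e k * e i + c * (e i + e j + e k) ≤ 0`, so positive deviations at `i` and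
`j` force a negative one at `k`. Applied to `(i, i, n - 2 * i)` it shows that the deficit at
`n - 2 * i` pays for the excess at `i`, and applied to `(0, j, j)` that there is no excess from the
middle on. For `i ≥ 2` the payers lie below `n - 3`, so it remains to let the last three deficits
pay for the excesses at `0` and `1`.
-/

theorem sum_le_sum_of_injOn {ι κ M : Type*} [AddCommMonoid M] [PartialOrder M]
    [IsOrderedAddMonoid M] {s : Finset ι} {t : Finset κ} {f : ι → M} {g : κ → M} (φ : ι → κ)
    (hmaps : ∀ i ∈ s, φ i ∈ t) (hinj : Set.InjOn φ s) (hg : ∀ j ∈ t, 0 ≤ g j)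
    (hfg : ∀ i ∈ s, f i ≤ g (φ i)) :
    ∑ i ∈ s, f i ≤ ∑ j ∈ t, g j := by
  classical
  calc ∑ i ∈ s, f i ≤ ∑ i ∈ s, g (φ i) := Finset.sum_le_sum hfg
    _ = ∑ j ∈ s.image φ, g j := (Finset.sum_image hinj).symm
    _ ≤ ∑ j ∈ t, g j := Finset.sum_le_sum_of_subset_of_nonneg
        (Finset.image_subset_iff.2 hmaps) fun j hj _ ↦ hg j hj

section OrderedField

variable {K : Type*} [Field K] [LinearOrder K]

section TripleInequality

variable [IsStrictOrderedRing K]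

theorem le_neg_half_add_of_triple_nonpos {c x y z : K} (hc : 0 < c) (hx : 0 ≤ x) (hxc : x ≤ c)
    (hy : 0 ≤ y) (hyc : y ≤ c) (h : x * y + y * z + z * x + c * (x + y + z) ≤ 0) :
    z ≤ -((x + y) / 2) := by
  by_contra! hz
  have hprod : 0 < (z + (x + y) / 2) * (x + y + c) := mul_pos (by linarith) (by linarith)
  have hrest : 0 ≤ x * (c - x) + y * (c - y) :=
    add_nonneg (mul_nonneg hx (sub_nonneg.2 hxc)) (mul_nonneg hy (sub_nonneg.2 hyc))
  linarith

-- At `y = -(x / 3)` the form in `h` equals `x * (3 * c - 5 * x) / 9`: with `x = a 0 - c`, this is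
-- where the bound `a 0 ≤ 8 / 5 * c` comes from.
theorem le_neg_third_of_triple_nonpos {c x y : K} (hx : 0 ≤ x) (hxc : 5 * x ≤ 3 * c)
    (h : x * y + y * y + y * x + c * (x + y + y) ≤ 0) : y ≤ -(x / 3) := by
  by_contra! hy
  have hprod : 0 < (y + x / 3) * (y + 5 * x / 3 + 2 * c) := mul_pos (by linarith) (by linarith)
  have hrest : 0 ≤ x * (3 * c - 5 * x) := mul_nonneg hx (sub_nonneg.2 hxc)
  linarith

end TripleInequality

/-- The deviations `e i = a i - c` of a decreasing sequence `a 0, …, a (n - 1)` with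
`a 0 ≤ 8 / 5 * c` whose triples with `i + j + k ≥ n` satisfy
`a i * a j + a j * a k + a k * a i ≤ c * (a i + a j + a k)`, these conditions being expressed
through `e` itself. -/
structure IsTripleDeviation (c : K) (n : ℕ) (e : ℕ → K) : Prop where
  antitoneOn : AntitoneOn e (Set.Iio n)
  head_le : 5 * e 0 ≤ 3 * c
  triple_nonpos : ∀ i j k, i < n → j < n → k < n → n ≤ i + j + k →
    e i * e j + e j * e k + e k * e i + c * (e i + e j + e k) ≤ 0

namespace IsTripleDeviation

variable {c : K} {n : ℕ} {e : ℕ → K}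

theorem le_head (he : IsTripleDeviation c n e) {i : ℕ} (hi : i < n) : e i ≤ e 0 :=
  he.antitoneOn (Set.mem_Iio.2 (i.zero_le.trans_lt hi)) (Set.mem_Iio.2 hi) i.zero_le

variable [IsStrictOrderedRing K]

theorem le_neg_half_add (he : IsTripleDeviation c n e) (h0 : 0 < e 0) {i j k : ℕ} (hi : i < n)
    (hj : j < n) (hk : k < n) (hijk : n ≤ i + j + k) (hei : 0 ≤ e i) (hej : 0 ≤ e j) :
    e k ≤ -((e i + e j) / 2) := by
  have hhead := he.head_le
  have hi_le := he.le_head hi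
  have hj_le := he.le_head hj
  exact le_neg_half_add_of_triple_nonpos (c := c) (by linarith) hei (by linarith) hej
    (by linarith) (he.triple_nonpos i j k hi hj hk hijk)

theorem le_neg_head_div_three (he : IsTripleDeviation c n e) (h0 : 0 < e 0) {j : ℕ} (hj : j < n)
    (hmid : n ≤ 2 * j) : e j ≤ -(e 0 / 3) :=
  le_neg_third_of_triple_nonpos h0.le he.head_le
    (he.triple_nonpos 0 j j (by lia) hj hj (by lia))

theorem posPart_le_negPart (he : IsTripleDeviation c n e) (h0 : 0 < e 0) {i : ℕ} (hi : 0 < i)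
    (hin : 2 * i ≤ n) : (e i)⁺ ≤ (e (n - 2 * i))⁻ := by
  refine sup_le ?_ (negPart_nonneg _)
  rcases le_total (e i) 0 with hei | hei
  · exact hei.trans (negPart_nonneg _)
  · have hpay : e (n - 2 * i) ≤ -((e i + e i) / 2) :=
      he.le_neg_half_add h0 (by lia) (by lia) (by lia) (by lia) hei hei
    exact (by linarith : e i ≤ -e (n - 2 * i)).trans (neg_le_negPart _)

theorem sum_posPart_Ico_two_le (he : IsTripleDeviation c n e) (h0 : 0 < e 0) :
    ∑ i ∈ Finset.Ico 2 n, (e i)⁺ ≤ ∑ j ∈ Finset.range (n - 3), (e j)⁻ := by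
  have hvanish : ∀ i ∈ Finset.Ico 2 n, (e i)⁺ ≠ 0 → 2 * i < n := by
    intro i hi hne
    by_contra! hmid
    have hneg := he.le_neg_head_div_three h0 (Finset.mem_Ico.1 hi).2 hmid
    exact hne (posPart_eq_zero.2 (by linarith))
  rw [← Finset.sum_filter_of_ne hvanish]
  refine sum_le_sum_of_injOn (fun i ↦ n - 2 * i) ?_ ?_ (fun j _ ↦ negPart_nonneg _) ?_
  · intro i hi
    simp only [Finset.mem_filter, Finset.mem_Ico, Finset.mem_range] at hi ⊢
    lia
  · intro i hi j hj hij
    simp only [Finset.coe_filter, Finset.mem_Ico, Set.mem_ofPred_eq] at hi hj hij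
    lia
  · intro i hi
    simp only [Finset.mem_filter, Finset.mem_Ico] at hi
    exact he.posPart_le_negPart h0 (by lia) hi.2.le

theorem posPart_zero_add_posPart_one_le (he : IsTripleDeviation c n e) (hn : 6 ≤ n)
    (h0 : 0 < e 0) :
    (e 0)⁺ + (e 1)⁺ ≤ (e (n - 3))⁻ + (e (n - 2))⁻ + (e (n - 1))⁻ := by
  suffices hsum : e (n - 3) + e (n - 2) + e (n - 1) + e 0 + (e 1)⁺ ≤ 0 by
    rw [posPart_eq_self.2 h0.le]
    linarith [neg_le_negPart (e (n - 3)), neg_le_negPart (e (n - 2)), neg_le_negPart (e (n - 1))]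
  have h3 : e (n - 3) ≤ -(e 0 / 3) := he.le_neg_head_div_three h0 (by lia) (by lia)
  have h2 : e (n - 2) ≤ -(e 0 / 3) := he.le_neg_head_div_three h0 (by lia) (by lia)
  rcases le_total (e 1) 0 with h1 | h1
  · have hlast : e (n - 1) ≤ -(e 0 / 3) := he.le_neg_head_div_three h0 (by lia) (by lia)
    rw [posPart_eq_zero.2 h1]
    linarith
  · have hlast : e (n - 1) ≤ -((e 0 + e 1) / 2) :=
      he.le_neg_half_add h0 (by lia) (by lia) (by lia) (by lia) h0.le h1
    have h2' : e (n - 2) ≤ -((e 1 + e 1) / 2) :=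
      he.le_neg_half_add h0 (by lia) (by lia) (by lia) (by lia) h1 h1
    rw [posPart_eq_self.2 h1]
    cases le_total (e 1) (e 0 / 3) <;> linarith

theorem sum_posPart_le_sum_negPart (he : IsTripleDeviation c n e) (hn : 6 ≤ n) (h0 : 0 < e 0) :
    ∑ i ∈ Finset.range n, (e i)⁺ ≤ ∑ i ∈ Finset.range n, (e i)⁻ :=
  calc ∑ i ∈ Finset.range n, (e i)⁺
      = (e 0)⁺ + (e 1)⁺ + ∑ i ∈ Finset.Ico 2 n, (e i)⁺ := by
        rw [← Finset.sum_range_add_sum_Ico _ (by lia : 2 ≤ n), Finset.sum_range_succ,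
          Finset.sum_range_one]
    _ ≤ (e (n - 3))⁻ + (e (n - 2))⁻ + (e (n - 1))⁻ + ∑ j ∈ Finset.range (n - 3), (e j)⁻ :=
        add_le_add (he.posPart_zero_add_posPart_one_le hn h0) (he.sum_posPart_Ico_two_le h0)
    _ = ∑ j ∈ Finset.range n, (e j)⁻ := by
        obtain ⟨m, rfl⟩ : ∃ m, n = m + 3 := ⟨n - 3, by lia⟩
        simp only [Finset.sum_range_succ, Nat.add_sub_cancel, (by lia : m + 3 - 2 = m + 1),
          (by lia : m + 3 - 1 = m + 2)]
        ring

theorem sum_nonpos (he : IsTripleDeviation c n e) (hn : 6 ≤ n) :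
    ∑ i ∈ Finset.range n, e i ≤ 0 := by
  rcases le_or_gt (e 0) 0 with h0 | h0
  · exact Finset.sum_nonpos fun i hi ↦ (he.le_head (Finset.mem_range.1 hi)).trans h0
  · calc ∑ i ∈ Finset.range n, e i
        = ∑ i ∈ Finset.range n, (e i)⁺ - ∑ i ∈ Finset.range n, (e i)⁻ := by
          simp only [← Finset.sum_sub_distrib, posPart_sub_negPart]
      _ ≤ 0 := sub_nonpos.2 (he.sum_posPart_le_sum_negPart hn h0)

end IsTripleDeviation

theorem stmt8_general [IsStrictOrderedRing K] {n : ℕ} (hn : 6 ≤ n) {c : K} {a : ℕ → K}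
    (hhead : a 0 ≤ 8 / 5 * c) (hdec : AntitoneOn a (Set.Iio n))
    (h : ∀ i j k, i < n → j < n → k < n → n ≤ i + j + k →
      a i * a j + a j * a k + a k * a i ≤ c * (a i + a j + a k)) :
    (∑ j ∈ Finset.range n, a j) / n ≤ c := by
  have he : IsTripleDeviation c n fun i ↦ a i - c :=
    { antitoneOn := fun i hi j hj hij ↦ sub_le_sub_right (hdec hi hj hij) c
      head_le := by linarith
      triple_nonpos := fun i j k hi hj hk hijk ↦ by linear_combination h i j k hi hj hk hijk }
  have hsum := he.sum_nonpos hn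
  rw [Finset.sum_sub_distrib, Finset.sum_const, Finset.card_range, nsmul_eq_mul, sub_nonpos,
    mul_comm] at hsum
  exact (div_le_iff₀ (by positivity)).2 hsum

end OrderedField

/-- Symmetric sequence lemma: let `n ≥ 6` be even and `a₀ ≥ a₁ ≥ ⋯ ≥ a_{n-1}` a decreasing
sequence in `[0,1]` such that `a_i a_j + a_j a_k + a_k a_i ≤ (5/8)(a_i + a_j + a_k)` for all
triples with `i + j + k ≥ n`. Then the average is at most `5/8`. -/
theorem stmt8 (n : ℕ) (hn : 6 ≤ n) (heven : Even n) (a : ℕ → ℝ)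
    (hmem : ∀ i < n, a i ∈ Set.Icc (0 : ℝ) 1)
    (hdec : ∀ i j, i ≤ j → j < n → a j ≤ a i)
    (h : ∀ i j k, i < n → j < n → k < n → n ≤ i + j + k →
      a i * a j + a j * a k + a k * a i ≤ 5 / 8 * (a i + a j + a k)) :
    (∑ j ∈ Finset.range n, a j) / n ≤ 5 / 8 :=
  stmt8_general hn (by linarith [(hmem 0 (by lia)).2]) (fun i _ j hj hij ↦ hdec i j hij hj) h
end

section
/- Let n ≥ 10 be an even positive integer and let {a_i}, {b_i}, {c_i} (0 ≤ i ≤ n−1) be three decreasing sequences of real numbers in [0,1], with averages A, B, C respectively. Suppose that for all triples (i,j,k) with 0 ≤ i, j, k ≤ n−1 and i + j + k ≥ n one has a_i b_j + b_j c_k + c_k a_i ≤ (5/8)(a_i + b_j + c_k). Then AB + BC + CA ≤ (5/8)(A + B + C). -/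
/-!
Let `f(x, y, z) = xy + yz + zx - (5/8)(x + y + z)`. Write `n = 2m` and cut each sequence into a head
and a tail of length `m`, with means `A₁, A₂` and so on. Since `f` has degree two and contains no
squares, `4 f(A, B, C)` is the sum of `f(A₁, B₁, C₂)`, `f(A₁, B₂, C₁)`, `f(A₂, B₁, C₁)` and
`f(A₂, B₂, C₂)`. For the same reason, `f(A₁, B₁, C₂)` is the mean of `f(a_i, b_j, c_{m+k})` over the
`m²` triples with `i + j + k ≡ 0 (mod m)`. All of these but `(0, 0, 0)` have `i + j + k ≥ m`, so
`m² f(A₁, B₁, C₂) ≤ f(a_0, b_0, c_m)`. Hence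
`4m² f(A, B, C) ≤ f(a_0, b_0, c_m) + f(a_0, b_m, c_0) + f(a_m, b_0, c_0) + m² f(A₂, B₂, C₂)`.

If `A₂ + B₂ + C₂ ≤ 3/4`, then `A + B + C ≤ 15/8`, which alone gives `f(A, B, C) ≤ 0`. Otherwise
`f(A₂, B₂, C₂)` is negative enough for `m² ≥ 25` copies of it to absorb the three corner terms.
-/

open Finset
open scoped BigOperators

/-- The amount by which `xy + yz + zx` exceeds `t (x + y + z)`; the theorem concerns `t = 5/8`. -/
def pairExcess {R : Type*} [CommRing R] (t x y z : R) : R :=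
  x * y + y * z + z * x - t * (x + y + z)

section CommRing

variable {R : Type*} [CommRing R] (t x y z : R)

theorem pairExcess_rotate : pairExcess t x y z = pairExcess t y z x := by
  unfold pairExcess
  ring

theorem pairExcess_eq_mul_add : pairExcess t x y z = x * (y + z - t) + (y * z - t * (y + z)) := by
  unfold pairExcess
  ring

end CommRing

section Averaging

variable {K : Type*} [Field K]

theorem four_mul_pairExcess_midpoint [NeZero (2 : K)] (t x₁ x₂ y₁ y₂ z₁ z₂ : K) :
    4 * pairExcess t ((x₁ + x₂) / 2) ((y₁ + y₂) / 2) ((z₁ + z₂) / 2) =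
      pairExcess t x₁ y₁ z₂ + pairExcess t x₁ y₂ z₁ + pairExcess t x₂ y₁ z₁ +
        pairExcess t x₂ y₂ z₂ := by
  unfold pairExcess
  field_simp
  ring

variable [CharZero K]

theorem expect_univ_fin (m : ℕ) (u : ℕ → K) : 𝔼 i : Fin m, u i = 𝔼 i ∈ range m, u i := by
  rw [Fintype.expect_eq_sum_div_card, expect_eq_sum_div_card, Fin.sum_univ_eq_sum_range,
    Fintype.card_fin, card_range]

theorem expect_range_add_self (m : ℕ) (u : ℕ → K) :
    𝔼 i ∈ range (m + m), u i = (𝔼 i ∈ range m, u i + 𝔼 i ∈ range m, u (m + i)) / 2 := by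
  simp only [expect_eq_sum_div_card, card_range, sum_range_add, Nat.cast_add]
  rw [← add_div, div_div, mul_two]

theorem pairExcess_expect {G : Type*} [AddCommGroup G] [Fintype G] (t : K) (u v w : G → K) :
    pairExcess t (𝔼 i, u i) (𝔼 j, v j) (𝔼 k, w k) =
      𝔼 i, 𝔼 j, pairExcess t (u i) (v j) (w (-(i + j))) := by
  have expect_w (i : G) : 𝔼 j, w (-(i + j)) = 𝔼 k, w k :=
    Fintype.expect_equiv ((Equiv.addLeft i).trans (Equiv.neg G)) _ _ fun _ ↦ rfl
  have expect_vw : 𝔼 i, 𝔼 j, v j * w (-(i + j)) = (𝔼 j, v j) * 𝔼 k, w k := by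
    rw [expect_comm, expect_mul]
    refine expect_congr rfl fun j _ ↦ ?_
    simp only [← mul_expect, add_comm _ j, expect_w]
  have expect_wu : 𝔼 i, 𝔼 j, w (-(i + j)) * u i = (𝔼 k, w k) * 𝔼 i, u i := by
    simp_rw [← expect_mul, expect_w, mul_expect]
  simp only [pairExcess, expect_sub_distrib, expect_add_distrib, expect_vw, expect_wu,
    Fintype.expect_mul_expect, ← mul_expect, expect_w, Fintype.expect_const]

end Averaging

section OrderedAveraging

variable {K : Type*} [Field K] [LinearOrder K] [IsStrictOrderedRing K]

theorem card_sq_mul_pairExcess_expect_le {G : Type*} [AddCommGroup G] [Fintype G] {t : K}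
    {u v w : G → K}
    (h : ∀ i j k, i + j + k = 0 → (i, j) ≠ 0 → pairExcess t (u i) (v j) (w k) ≤ 0) :
    (Fintype.card G : K) ^ 2 * pairExcess t (𝔼 i, u i) (𝔼 j, v j) (𝔼 k, w k) ≤
      pairExcess t (u 0) (v 0) (w 0) := by
  classical
  calc (Fintype.card G : K) ^ 2 * pairExcess t (𝔼 i, u i) (𝔼 j, v j) (𝔼 k, w k)
      = ∑ p : G × G, pairExcess t (u p.1) (v p.2) (w (-(p.1 + p.2))) := by
        rw [pairExcess_expect, sq, mul_assoc, Fintype.card_mul_expect, mul_sum,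
          Fintype.sum_prod_type]
        simp only [Fintype.card_mul_expect]
    _ = pairExcess t (u 0) (v 0) (w 0) +
          ∑ p ∈ univ.erase (0 : G × G), pairExcess t (u p.1) (v p.2) (w (-(p.1 + p.2))) := by
        rw [← add_sum_erase _ _ (mem_univ (0 : G × G))]
        simp
    _ ≤ pairExcess t (u 0) (v 0) (w 0) :=
        add_le_of_nonpos_right <| sum_nonpos fun p hp ↦
          h p.1 p.2 _ (add_neg_cancel _) (ne_of_mem_erase hp)

theorem le_val_add_val_add_val_of_add_eq_zero {m : ℕ} [NeZero m] {i j k : Fin m}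
    (hsum : i + j + k = 0) (hne : (i, j) ≠ 0) : m ≤ (i : ℕ) + j + k := by
  have hdvd : m ∣ (i : ℕ) + j + k := by
    have hval : ((i + j + k : Fin m) : ℕ) = 0 := by simp [hsum]
    rw [Fin.val_add, Fin.val_add, Nat.mod_add_mod] at hval
    exact Nat.dvd_of_mod_eq_zero hval
  refine Nat.le_of_dvd (Nat.pos_of_ne_zero fun hzero ↦ hne ?_) hdvd
  simp only [Prod.mk_eq_zero, ← Fin.val_eq_zero_iff]
  omega

theorem sq_mul_pairExcess_expect_range_le {m : ℕ} (hm : 0 < m) {t : K} {u v w : ℕ → K}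
    (h : ∀ i j k, i < m → j < m → k < m → m ≤ i + j + k → pairExcess t (u i) (v j) (w k) ≤ 0) :
    (m : K) ^ 2 * pairExcess t (𝔼 i ∈ range m, u i) (𝔼 i ∈ range m, v i) (𝔼 i ∈ range m, w i) ≤
      pairExcess t (u 0) (v 0) (w 0) := by
  have : NeZero m := ⟨hm.ne'⟩
  simpa [expect_univ_fin] using card_sq_mul_pairExcess_expect_le (G := Fin m) (t := t)
    (u := fun i ↦ u i) (v := fun j ↦ v j) (w := fun k ↦ w k) fun i j k hsum hne ↦
      h i j k i.2 j.2 k.2 (le_val_add_val_add_val_of_add_eq_zero hsum hne)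

theorem four_mul_sq_mul_pairExcess_expect_le {m : ℕ} (hm : 0 < m) {t : K} {a b c : ℕ → K}
    (h : ∀ i j k, i < m + m → j < m + m → k < m + m → m + m ≤ i + j + k →
      pairExcess t (a i) (b j) (c k) ≤ 0) :
    4 * (m : K) ^ 2 * pairExcess t (𝔼 i ∈ range (m + m), a i) (𝔼 i ∈ range (m + m), b i)
        (𝔼 i ∈ range (m + m), c i) ≤
      pairExcess t (a 0) (b 0) (c m) + pairExcess t (a 0) (b m) (c 0) +
        pairExcess t (a m) (b 0) (c 0) +
        (m : K) ^ 2 * pairExcess t (𝔼 i ∈ range m, a (m + i)) (𝔼 i ∈ range m, b (m + i))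
          (𝔼 i ∈ range m, c (m + i)) := by
  have hc := sq_mul_pairExcess_expect_range_le hm (t := t) (u := a) (v := b)
    (w := fun k ↦ c (m + k)) fun _ _ _ _ _ _ _ ↦
      h _ _ _ (by omega) (by omega) (by omega) (by omega)
  have hb := sq_mul_pairExcess_expect_range_le hm (t := t) (u := a) (v := fun j ↦ b (m + j))
    (w := c) fun _ _ _ _ _ _ _ ↦ h _ _ _ (by omega) (by omega) (by omega) (by omega)
  have ha := sq_mul_pairExcess_expect_range_le hm (t := t) (u := fun i ↦ a (m + i)) (v := b)
    (w := c) fun _ _ _ _ _ _ _ ↦ h _ _ _ (by omega) (by omega) (by omega) (by omega)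
  rw [mul_comm 4, mul_assoc, expect_range_add_self m a, expect_range_add_self m b,
    expect_range_add_self m c, four_mul_pairExcess_midpoint]
  simp only [add_zero] at ha hb hc
  linarith

end OrderedAveraging

section OrderedRing

variable {R : Type*} [CommRing R] [LinearOrder R] [IsStrictOrderedRing R] {t x y z α β γ p q : R}

theorem pairExcess_nonpos_of_add_le (h₀ : 0 ≤ x + y + z) (h : x + y + z ≤ 3 * t) :
    pairExcess t x y z ≤ 0 := by
  have hpairs : 3 * (x * y + y * z + z * x) ≤ (x + y + z) ^ 2 := by
    linarith [sq_nonneg (x - y), sq_nonneg (y - z), sq_nonneg (z - x)]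
  have hsq : (x + y + z) ^ 2 ≤ 3 * t * (x + y + z) := by
    rw [sq]
    exact mul_le_mul_of_nonneg_right h h₀
  unfold pairExcess
  linarith

theorem pairExcess_le_three_mul (ht : t ≤ 1) (hx₀ : 0 ≤ x) (hx₁ : x ≤ 1) (hy₀ : 0 ≤ y) (hy₁ : y ≤ 1)
    (hz₀ : 0 ≤ z) (hz₁ : z ≤ 1) : pairExcess t x y z ≤ 3 * (1 - t) := by
  have hpairs : x * y + y * z + z * x ≤ x + y + z :=
    add_le_add_three (mul_le_of_le_one_right hx₀ hy₁) (mul_le_of_le_one_right hy₀ hz₁)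
      (mul_le_of_le_one_right hz₀ hx₁)
  have hscale : (1 - t) * (x + y + z) ≤ (1 - t) * 3 :=
    mul_le_mul_of_nonneg_left (by linarith) (sub_nonneg.2 ht)
  unfold pairExcess
  linarith

theorem pairExcess_le_pairExcess (hα : α ≤ x) (hβ : β ≤ y) (hγ : γ ≤ z)
    (hαβ : t ≤ α + β) (hβγ : t ≤ β + γ) (hγα : t ≤ γ + α) :
    pairExcess t α β γ ≤ pairExcess t x y z := by
  have telescope : pairExcess t x y z - pairExcess t α β γ =
      (x - α) * (y + z - t) + (y - β) * (z + α - t) + (z - γ) * (α + β - t) := by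
    unfold pairExcess
    ring
  have hx := mul_nonneg (sub_nonneg.2 hα) (by linarith : 0 ≤ y + z - t)
  have hy := mul_nonneg (sub_nonneg.2 hβ) (by linarith : 0 ≤ z + α - t)
  have hz := mul_nonneg (sub_nonneg.2 hγ) (by linarith : 0 ≤ α + β - t)
  linarith

theorem mul_pairExcess_corner_le {δ : R} (hδ : 0 ≤ δ) (hxp : x ≤ p) (hqy : q ≤ y + 1)
    (hα : α ≤ x) (hβ : β ≤ y) (hγ : γ ≤ z)
    (hαβ : t + δ ≤ α + β) (hβγ : t + δ ≤ β + γ) (hγα : t + δ ≤ γ + α)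
    (hpyz : pairExcess t p y z ≤ 0) (hxqz : pairExcess t x q z ≤ 0) :
    δ * pairExcess t p q z ≤ -(1 + δ) * pairExcess t α β γ := by
  have hmono : pairExcess t α β γ ≤ pairExcess t x y z :=
    pairExcess_le_pairExcess hα hβ hγ (by linarith) (by linarith) (by linarith)
  have move_p : pairExcess t p y z = pairExcess t x y z + (p - x) * (y + z - t) := by
    unfold pairExcess
    ring
  have mixed_difference : pairExcess t p q z =
      pairExcess t p y z + pairExcess t x q z - pairExcess t x y z + (p - x) * (q - y) := by
    unfold pairExcess
    ring
  have hgap : (p - x) * (q - y) ≤ p - x :=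
    mul_le_of_le_one_right (sub_nonneg.2 hxp) (by linarith)
  have hslope : (p - x) * δ ≤ (p - x) * (y + z - t) :=
    mul_le_mul_of_nonneg_left (by linarith) (sub_nonneg.2 hxp)
  have hcorner : pairExcess t p q z ≤ -pairExcess t α β γ + (p - x) := by linarith
  have hscaled := mul_le_mul_of_nonneg_left hcorner hδ
  linarith

end OrderedRing

section CornerBounds

variable {K : Type*} [Field K] [LinearOrder K] [IsStrictOrderedRing K] {x y z α β γ p q r : K}

-- The bound satisfies `25 * (27 / 200) = 3 * (9 / 8)`, where `9 / 8` bounds each corner term.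
theorem pairExcess_le_of_small_pair (hα : α ≤ 1) (hsmall : β + γ ≤ 4 / 5)
    (hsum : 3 / 4 ≤ α + β + γ) : pairExcess (5 / 8) α β γ ≤ -(27 / 200) := by
  have hprod : β * γ ≤ (β + γ) ^ 2 / 4 := by linarith [sq_nonneg (β - γ)]
  rw [add_assoc] at hsum
  rw [pairExcess_eq_mul_add]
  generalize β + γ = s at *
  rcases le_total s (5 / 8) with hs | hs
  · have : α * (s - 5 / 8) ≤ (3 / 4 - s) * (s - 5 / 8) :=
      mul_le_mul_of_nonpos_right (by linarith) (by linarith)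
    linarith [sq_nonneg (s - 1 / 2)]
  · have : α * (s - 5 / 8) ≤ 1 * (s - 5 / 8) := mul_le_mul_of_nonneg_right hα (by linarith)
    have : s ^ 2 ≤ (4 / 5) ^ 2 := pow_le_pow_left₀ (by linarith) hsmall 2
    linarith

theorem corners_add_mul_nonpos_of_large_pairs {M : K} (hM : 25 ≤ M)
    (hα₀ : 0 ≤ α) (hβ₀ : 0 ≤ β) (hγ₀ : 0 ≤ γ) (hαx : α ≤ x) (hβy : β ≤ y) (hγz : γ ≤ z)
    (hxp : x ≤ p) (hyq : y ≤ q) (hzr : z ≤ r) (hp : p ≤ 1) (hq : q ≤ 1) (hr : r ≤ 1)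
    (hαβ : 4 / 5 ≤ α + β) (hβγ : 4 / 5 ≤ β + γ) (hγα : 4 / 5 ≤ γ + α)
    (hpyz : pairExcess (5 / 8) p y z ≤ 0) (hxqz : pairExcess (5 / 8) x q z ≤ 0)
    (hxyr : pairExcess (5 / 8) x y r ≤ 0) :
    pairExcess (5 / 8) p q z + pairExcess (5 / 8) p y r + pairExcess (5 / 8) x q r +
      M * pairExcess (5 / 8) α β γ ≤ 0 := by
  have htail : pairExcess (5 / 8) α β γ ≤ 0 :=
    (pairExcess_le_pairExcess (hαx.trans hxp) hβy hγz (by linarith) (by linarith)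
      (by linarith)).trans hpyz
  have hδ : (0 : K) ≤ 7 / 40 := by norm_num
  have hpq := mul_pairExcess_corner_le (t := 5 / 8) hδ hxp (by linarith : q ≤ y + 1) hαx hβy hγz
    (by linarith) (by linarith) (by linarith) hpyz hxqz
  have hqr := mul_pairExcess_corner_le (t := 5 / 8) hδ hyq (by linarith : r ≤ z + 1) hβy hγz hαx
    (by linarith) (by linarith) (by linarith) (by rwa [← pairExcess_rotate])
    (by rwa [← pairExcess_rotate])
  have hrp := mul_pairExcess_corner_le (t := 5 / 8) hδ hzr (by linarith : p ≤ x + 1) hγz hαx hβy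
    (by linarith) (by linarith) (by linarith) (by rwa [pairExcess_rotate])
    (by rwa [pairExcess_rotate])
  rw [← pairExcess_rotate _ x q r, ← pairExcess_rotate _ α β γ] at hqr
  rw [pairExcess_rotate _ r p y, pairExcess_rotate _ γ α β] at hrp
  have hscale := mul_le_mul_of_nonpos_right hM htail
  linarith

theorem corners_add_mul_nonpos_of_tail_le {M : K} (hM : 25 ≤ M)
    (hx : 0 ≤ x) (hy : 0 ≤ y) (hz : 0 ≤ z)
    (hxp : x ≤ p) (hyq : y ≤ q) (hzr : z ≤ r) (hp : p ≤ 1) (hq : q ≤ 1) (hr : r ≤ 1)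
    (htail : pairExcess (5 / 8) α β γ ≤ -(27 / 200)) :
    pairExcess (5 / 8) p q z + pairExcess (5 / 8) p y r + pairExcess (5 / 8) x q r +
      M * pairExcess (5 / 8) α β γ ≤ 0 := by
  have ht : (5 / 8 : K) ≤ 1 := by norm_num
  have hpqz := pairExcess_le_three_mul ht (hx.trans hxp) hp (hy.trans hyq) hq hz (hzr.trans hr)
  have hpyr := pairExcess_le_three_mul ht (hx.trans hxp) hp hy (hyq.trans hq) (hz.trans hzr) hr
  have hxqr := pairExcess_le_three_mul ht hx (hxp.trans hp) (hy.trans hyq) hq (hz.trans hzr) hr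
  have hscale := mul_le_mul_of_nonpos_right hM (by linarith : pairExcess (5 / 8) α β γ ≤ 0)
  linarith

theorem corners_add_mul_nonpos {M : K} (hM : 25 ≤ M)
    (hα₀ : 0 ≤ α) (hβ₀ : 0 ≤ β) (hγ₀ : 0 ≤ γ) (hαx : α ≤ x) (hβy : β ≤ y) (hγz : γ ≤ z)
    (hxp : x ≤ p) (hyq : y ≤ q) (hzr : z ≤ r) (hp : p ≤ 1) (hq : q ≤ 1) (hr : r ≤ 1)
    (hsum : 3 / 4 ≤ α + β + γ)
    (hpyz : pairExcess (5 / 8) p y z ≤ 0) (hxqz : pairExcess (5 / 8) x q z ≤ 0)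
    (hxyr : pairExcess (5 / 8) x y r ≤ 0) :
    pairExcess (5 / 8) p q z + pairExcess (5 / 8) p y r + pairExcess (5 / 8) x q r +
      M * pairExcess (5 / 8) α β γ ≤ 0 := by
  have of_tail_le := corners_add_mul_nonpos_of_tail_le (α := α) (β := β) (γ := γ) hM (hα₀.trans hαx)
    (hβ₀.trans hβy) (hγ₀.trans hγz) hxp hyq hzr hp hq hr
  rcases le_total (β + γ) (4 / 5) with hβγ | hβγ
  · exact of_tail_le (pairExcess_le_of_small_pair (by linarith) hβγ hsum)
  rcases le_total (γ + α) (4 / 5) with hγα | hγα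
  · rw [pairExcess_rotate _ α β γ] at of_tail_le ⊢
    exact of_tail_le (pairExcess_le_of_small_pair (by linarith) hγα (by linarith))
  rcases le_total (α + β) (4 / 5) with hαβ | hαβ
  · rw [← pairExcess_rotate _ γ α β] at of_tail_le ⊢
    exact of_tail_le (pairExcess_le_of_small_pair (by linarith) hαβ (by linarith))
  exact corners_add_mul_nonpos_of_large_pairs hM hα₀ hβ₀ hγ₀ hαx hβy hγz hxp hyq hzr hp hq hr
    hαβ hβγ hγα hpyz hxqz hxyr

end CornerBounds

section Sequences

variable {K : Type*} [Field K] [LinearOrder K] [IsStrictOrderedRing K] {m : ℕ} {a b c : ℕ → K}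

theorem expect_tail_nonneg (h₀ : ∀ i < m + m, 0 ≤ a i) : 0 ≤ 𝔼 i ∈ range m, a (m + i) :=
  expect_nonneg fun i hi ↦ h₀ _ (by have := mem_range.1 hi; omega)

theorem expect_tail_le (hm : 0 < m) (hdec : ∀ i j, i ≤ j → j < m + m → a j ≤ a i) :
    𝔼 i ∈ range m, a (m + i) ≤ a m :=
  expect_le (nonempty_range_iff.2 hm.ne') fun i hi ↦
    hdec m (m + i) (by omega) (by have := mem_range.1 hi; omega)

theorem expect_le_midpoint_one_expect_tail (hm : 0 < m) (h₁ : ∀ i < m + m, a i ≤ 1) :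
    𝔼 i ∈ range (m + m), a i ≤ (1 + 𝔼 i ∈ range m, a (m + i)) / 2 := by
  have hhead : 𝔼 i ∈ range m, a i ≤ 1 :=
    expect_le (nonempty_range_iff.2 hm.ne') fun i hi ↦ h₁ i (by have := mem_range.1 hi; omega)
  rw [expect_range_add_self]
  linarith

theorem pairExcess_expect_nonpos_of_tail_le (hm : 0 < m)
    (hamem : ∀ i < m + m, a i ∈ Set.Icc 0 1) (hbmem : ∀ i < m + m, b i ∈ Set.Icc 0 1)
    (hcmem : ∀ i < m + m, c i ∈ Set.Icc 0 1)
    (htail : 𝔼 i ∈ range m, a (m + i) + 𝔼 i ∈ range m, b (m + i) + 𝔼 i ∈ range m, c (m + i) ≤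
      3 / 4) :
    pairExcess (5 / 8) (𝔼 i ∈ range (m + m), a i) (𝔼 i ∈ range (m + m), b i)
      (𝔼 i ∈ range (m + m), c i) ≤ 0 := by
  have expect_nonneg_of_mem {u : ℕ → K} (hu : ∀ i < m + m, u i ∈ Set.Icc 0 1) :
      0 ≤ 𝔼 i ∈ range (m + m), u i :=
    expect_nonneg fun i hi ↦ (hu i (mem_range.1 hi)).1
  have ha := expect_le_midpoint_one_expect_tail hm fun i hi ↦ (hamem i hi).2
  have hb := expect_le_midpoint_one_expect_tail hm fun i hi ↦ (hbmem i hi).2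
  have hc := expect_le_midpoint_one_expect_tail hm fun i hi ↦ (hcmem i hi).2
  exact pairExcess_nonpos_of_add_le
    (add_nonneg (add_nonneg (expect_nonneg_of_mem hamem) (expect_nonneg_of_mem hbmem))
      (expect_nonneg_of_mem hcmem)) (by linarith)

theorem pairExcess_expect_nonpos_of_le_tail (hm : 5 ≤ m)
    (hamem : ∀ i < m + m, a i ∈ Set.Icc 0 1) (hbmem : ∀ i < m + m, b i ∈ Set.Icc 0 1)
    (hcmem : ∀ i < m + m, c i ∈ Set.Icc 0 1)
    (hadec : ∀ i j, i ≤ j → j < m + m → a j ≤ a i) (hbdec : ∀ i j, i ≤ j → j < m + m → b j ≤ b i)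
    (hcdec : ∀ i j, i ≤ j → j < m + m → c j ≤ c i)
    (hneg : ∀ i j k, i < m + m → j < m + m → k < m + m → m + m ≤ i + j + k →
      pairExcess (5 / 8) (a i) (b j) (c k) ≤ 0)
    (htail : 3 / 4 ≤
      𝔼 i ∈ range m, a (m + i) + 𝔼 i ∈ range m, b (m + i) + 𝔼 i ∈ range m, c (m + i)) :
    pairExcess (5 / 8) (𝔼 i ∈ range (m + m), a i) (𝔼 i ∈ range (m + m), b i)
      (𝔼 i ∈ range (m + m), c i) ≤ 0 := by
  have hm₀ : 0 < m := by omega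
  have hsq : (25 : K) ≤ (m : K) ^ 2 := by exact_mod_cast Nat.pow_le_pow_left hm 2
  have hcorners := corners_add_mul_nonpos hsq
    (expect_tail_nonneg fun i hi ↦ (hamem i hi).1) (expect_tail_nonneg fun i hi ↦ (hbmem i hi).1)
    (expect_tail_nonneg fun i hi ↦ (hcmem i hi).1)
    (expect_tail_le hm₀ hadec) (expect_tail_le hm₀ hbdec) (expect_tail_le hm₀ hcdec)
    (hadec 0 m (by omega) (by omega)) (hbdec 0 m (by omega) (by omega))
    (hcdec 0 m (by omega) (by omega))
    (hamem 0 (by omega)).2 (hbmem 0 (by omega)).2 (hcmem 0 (by omega)).2 htail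
    (hneg 0 m m (by omega) (by omega) (by omega) (by omega))
    (hneg m 0 m (by omega) (by omega) (by omega) (by omega))
    (hneg m m 0 (by omega) (by omega) (by omega) (by omega))
  exact nonpos_of_mul_nonpos_right
    ((four_mul_sq_mul_pairExcess_expect_le hm₀ hneg).trans hcorners) (by positivity)

end Sequences

theorem stmt10_general {K : Type*} [Field K] [LinearOrder K] [IsStrictOrderedRing K]
    (n : ℕ) (hn : 10 ≤ n) (heven : Even n) (a b c : ℕ → K)
    (hamem : ∀ i < n, a i ∈ Set.Icc (0 : K) 1)
    (hbmem : ∀ i < n, b i ∈ Set.Icc (0 : K) 1)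
    (hcmem : ∀ i < n, c i ∈ Set.Icc (0 : K) 1)
    (hadec : ∀ i j, i ≤ j → j < n → a j ≤ a i)
    (hbdec : ∀ i j, i ≤ j → j < n → b j ≤ b i)
    (hcdec : ∀ i j, i ≤ j → j < n → c j ≤ c i)
    (h : ∀ i j k, i < n → j < n → k < n → n ≤ i + j + k →
      a i * b j + b j * c k + c k * a i ≤ 5 / 8 * (a i + b j + c k))
    (A B C : K)
    (hA : A = (∑ i ∈ range n, a i) / n)
    (hB : B = (∑ i ∈ range n, b i) / n)
    (hC : C = (∑ i ∈ range n, c i) / n) :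
    A * B + B * C + C * A ≤ 5 / 8 * (A + B + C) := by
  obtain ⟨m, rfl⟩ := heven
  have hm : 0 < m := by omega
  have hneg (i j k : ℕ) (hi : i < m + m) (hj : j < m + m) (hk : k < m + m)
      (hsum : m + m ≤ i + j + k) : pairExcess (5 / 8) (a i) (b j) (c k) ≤ 0 :=
    sub_nonpos.2 (h i j k hi hj hk hsum)
  have hmean (u : ℕ → K) :
      (∑ i ∈ range (m + m), u i) / (m + m : ℕ) = 𝔼 i ∈ range (m + m), u i := by
    rw [expect_eq_sum_div_card, card_range]
  suffices pairExcess (5 / 8) A B C ≤ 0 from sub_nonpos.1 this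
  rw [hA, hB, hC, hmean, hmean, hmean]
  rcases le_total (𝔼 i ∈ range m, a (m + i) + 𝔼 i ∈ range m, b (m + i) +
    𝔼 i ∈ range m, c (m + i)) (3 / 4) with htail | htail
  · exact pairExcess_expect_nonpos_of_tail_le hm hamem hbmem hcmem htail
  · exact pairExcess_expect_nonpos_of_le_tail (by omega) hamem hbmem hcmem hadec hbdec hcdec hneg
      htail

/-- Asymmetric sequence lemma: let `n ≥ 10` be even and `{a_i}, {b_i}, {c_i}` three
decreasing sequences in `[0,1]` with averages `A, B, C`. If
`a_i b_j + b_j c_k + c_k a_i ≤ (5/8)(a_i + b_j + c_k)` for all triples with `i + j + k ≥ n`,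
then `AB + BC + CA ≤ (5/8)(A + B + C)`. -/
theorem stmt10 (n : ℕ) (hn : 10 ≤ n) (heven : Even n) (a b c : ℕ → ℝ)
    (hamem : ∀ i < n, a i ∈ Set.Icc (0 : ℝ) 1)
    (hbmem : ∀ i < n, b i ∈ Set.Icc (0 : ℝ) 1)
    (hcmem : ∀ i < n, c i ∈ Set.Icc (0 : ℝ) 1)
    (hadec : ∀ i j, i ≤ j → j < n → a j ≤ a i)
    (hbdec : ∀ i j, i ≤ j → j < n → b j ≤ b i)
    (hcdec : ∀ i j, i ≤ j → j < n → c j ≤ c i)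
    (h : ∀ i j k, i < n → j < n → k < n → n ≤ i + j + k →
      a i * b j + b j * c k + c k * a i ≤ 5 / 8 * (a i + b j + c k))
    (A B C : ℝ)
    (hA : A = (∑ i ∈ Finset.range n, a i) / n)
    (hB : B = (∑ i ∈ Finset.range n, b i) / n)
    (hC : C = (∑ i ∈ Finset.range n, c i) / n) :
    A * B + B * C + C * A ≤ 5 / 8 * (A + B + C) :=
  stmt10_general n hn heven a b c hamem hbmem hcmem hadec hbdec hcdec h A B C hA hB hC
end

section
/- Let A, B, C be arbitrary subsets of (Z/15Z)* such that |A||B| + |B||C| + |C||A| > 5(|A| + |B| + |C|). Then A + B + C = Z/15Z, i.e., every element of Z/15Z can be written as a + b + c with a ∈ A, b ∈ B, c ∈ C. -/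
/-!
By the Chinese remainder theorem a set of units of `ℤ/3p` splits into two classes modulo `3`, each
of them a set of at most `p - 1` residues modulo `p`. By Cauchy–Davenport, nonempty classes of `A`,
`B`, `C` of total size at least `p + 2` sum to all of `ℤ/p`, so for each residue `r` modulo `3` it
suffices to find three such classes with labels summing to `r`. If `|A| + |B| + |C| > 3p` and no
class is empty, averaging over the choices of labels finds them. If, say, `C` has a single class,
any choice of labels works, as soon as neither `A` nor `B` can have an empty class. For `p = 5` the
quadratic inequality guarantees both requirements.
-/

open Finset
open scoped Pointwise

theorem card_le_totient_of_forall_isUnit {n : ℕ} [NeZero n] {A : Finset (ZMod n)}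
    (hA : ∀ a ∈ A, IsUnit a) : #A ≤ n.totient := by
  have hsub : A ⊆ (univ : Finset (ZMod n)ˣ).image Units.val := fun a ha ↦ by
    obtain ⟨u, rfl⟩ := hA a ha
    exact mem_image_of_mem _ (mem_univ u)
  calc #A ≤ #((univ : Finset (ZMod n)ˣ).image Units.val) := card_le_card hsub
    _ ≤ #(univ : Finset (ZMod n)ˣ) := card_image_le
    _ = n.totient := by rw [card_univ, ZMod.card_units_eq_totient]

/-- The slice `{y | (i, y) ∈ A}` of a finite set of pairs; for `A ⊆ ℤ/3 × ℤ/p ≃ ℤ/3p` it is the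
part of `A` in the residue class `i` modulo `3`, read modulo `p`. -/
def prodFiber {α β : Type*} [DecidableEq α] [DecidableEq β] [Fintype β]
    (A : Finset (α × β)) (i : α) : Finset β :=
  {y | (i, y) ∈ A}

section Fiber

variable {α β : Type*} [DecidableEq α] [DecidableEq β] [Fintype β]

@[simp]
theorem mem_prodFiber {A : Finset (α × β)} {i : α} {y : β} : y ∈ prodFiber A i ↔ (i, y) ∈ A := by
  simp [prodFiber]

theorem sum_card_prodFiber [Fintype α] (A : Finset (α × β)) : ∑ i, #(prodFiber A i) = #A := by
  rw [card_eq_sum_card_fiberwise (f := Prod.fst) (t := univ) fun _ _ ↦ mem_coe.2 (mem_univ _)]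
  refine sum_congr rfl fun i _ ↦ ?_
  rw [← card_map (Function.Embedding.sectR i β)]
  congr 1
  ext ⟨j, y⟩
  simp only [mem_map, mem_prodFiber, Function.Embedding.sectR_apply, Prod.mk.injEq, mem_filter]
  constructor
  · rintro ⟨_, hy, rfl, rfl⟩
    exact ⟨hy, rfl⟩
  · rintro ⟨hy, rfl⟩
    exact ⟨y, hy, rfl, rfl⟩

theorem mk_mem_add_of_mem_add_prodFiber [Add α] [Add β] {A B C : Finset (α × β)} {i j k : α} {y : β}
    (hy : y ∈ prodFiber A i + prodFiber B j + prodFiber C k) : (i + j + k, y) ∈ A + B + C := by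
  obtain ⟨_, hab, c, hc, rfl⟩ := mem_add.1 hy
  obtain ⟨a, ha, b, hb, rfl⟩ := mem_add.1 hab
  rw [mem_prodFiber] at ha hb hc
  exact add_mem_add (add_mem_add ha hb) hc

end Fiber

section ThreePrime

variable {p : ℕ} [Fact p.Prime]

theorem add_add_eq_univ_of_add_two_le_card {S T U : Finset (ZMod p)}
    (hS : S.Nonempty) (hT : T.Nonempty) (hU : U.Nonempty) (hcard : p + 2 ≤ #S + #T + #U) :
    S + T + U = univ := by
  have hp : p.Prime := Fact.out
  have hST := ZMod.cauchy_davenport hp hS hT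
  have hSTU := ZMod.cauchy_davenport hp (hS.add hT) hU
  have hUpos := hU.card_pos
  rw [← card_eq_iff_eq_univ, ZMod.card]
  refine le_antisymm ((card_le_univ _).trans_eq (ZMod.card p)) ?_
  omega

variable {A B C : Finset (ZMod 3 × ZMod p)}

theorem mk_mem_add_of_add_two_le_card_prodFiber {i j k : ZMod 3}
    (hA : (prodFiber A i).Nonempty) (hB : (prodFiber B j).Nonempty) (hC : (prodFiber C k).Nonempty)
    (hcard : p + 2 ≤ #(prodFiber A i) + #(prodFiber B j) + #(prodFiber C k)) (y : ZMod p) :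
    (i + j + k, y) ∈ A + B + C :=
  mk_mem_add_of_mem_add_prodFiber <| by
    rw [add_add_eq_univ_of_add_two_le_card hA hB hC hcard]
    exact mem_univ y

theorem card_prodFiber_lt (hA : ∀ a ∈ A, IsUnit a) (i : ZMod 3) : #(prodFiber A i) < p := by
  have hp : p.Prime := Fact.out
  have hle : #(prodFiber A i) ≤ p.totient := card_le_totient_of_forall_isUnit fun y hy ↦
    (Prod.isUnit_iff.1 (hA _ (mem_prodFiber.1 hy))).2
  exact hle.trans_lt (Nat.totient_lt p hp.one_lt)

theorem prodFiber_zero (hA : ∀ a ∈ A, IsUnit a) : prodFiber A 0 = ∅ :=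
  eq_empty_of_forall_notMem fun _ hy ↦
    not_isUnit_zero (Prod.isUnit_iff.1 (hA _ (mem_prodFiber.1 hy))).1

theorem card_prodFiber_add_card_prodFiber_neg (hA : ∀ a ∈ A, IsUnit a) {i : ZMod 3} (hi : i ≠ 0) :
    #(prodFiber A i) + #(prodFiber A (-i)) = #A := by
  have huniv : (univ : Finset (ZMod 3)) = {0, i, -i} := by decide +revert
  have hne : i ≠ -i := by decide +revert
  rw [← sum_card_prodFiber A, huniv, sum_insert (by simp [hi, hi.symm]), sum_pair hne,
    prodFiber_zero hA, card_empty, zero_add]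

theorem prodFiber_nonempty_of_le_card (hA : ∀ a ∈ A, IsUnit a) (hcard : p ≤ #A) {i : ZMod 3}
    (hi : i ≠ 0) : (prodFiber A i).Nonempty := by
  have hsum := card_prodFiber_add_card_prodFiber_neg hA hi
  have hlt := card_prodFiber_lt hA (-i)
  exact card_pos.1 (by omega)

theorem add_add_eq_univ_of_prodFiber_eq_empty (hA : ∀ a ∈ A, IsUnit a) (hB : ∀ b ∈ B, IsUnit b)
    (hC : ∀ c ∈ C, IsUnit c) (hCne : C.Nonempty) (hsum : 3 * p < #A + #B + #C)
    (hAC : p ≤ max #A #C) (hBC : p ≤ max #B #C) {k : ZMod 3} (hk : k ≠ 0)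
    (hempty : prodFiber C k = ∅) : A + B + C = univ := by
  have hCcard : #(prodFiber C (-k)) = #C := by
    simpa [hempty] using card_prodFiber_add_card_prodFiber_neg hC hk
  have hClt : #C < p := hCcard ▸ card_prodFiber_lt hC (-k)
  refine eq_univ_of_forall fun ⟨r, y⟩ ↦ ?_
  obtain ⟨i, j, hi, hj, hijk⟩ : ∃ i j : ZMod 3, i ≠ 0 ∧ j ≠ 0 ∧ i + j + -k = r := by
    clear * -
    decide +revert
  have hAsplit := card_prodFiber_add_card_prodFiber_neg hA hi
  have hBsplit := card_prodFiber_add_card_prodFiber_neg hB hj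
  have hAlt := card_prodFiber_lt hA (-i)
  have hBlt := card_prodFiber_lt hB (-j)
  rw [← hijk]
  exact mk_mem_add_of_add_two_le_card_prodFiber
    (prodFiber_nonempty_of_le_card hA (by omega) hi)
    (prodFiber_nonempty_of_le_card hB (by omega) hj)
    (card_pos.1 (hCcard ▸ hCne.card_pos)) (by omega) y

theorem add_add_eq_univ_of_forall_prodFiber_nonempty (hA : ∀ a ∈ A, IsUnit a)
    (hB : ∀ b ∈ B, IsUnit b) (hC : ∀ c ∈ C, IsUnit c) (hsum : 3 * p < #A + #B + #C)
    (hAne : ∀ i ≠ 0, (prodFiber A i).Nonempty) (hBne : ∀ i ≠ 0, (prodFiber B i).Nonempty)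
    (hCne : ∀ i ≠ 0, (prodFiber C i).Nonempty) : A + B + C = univ := by
  have hcover {i j k : ZMod 3} (hi : i ≠ 0) (hj : j ≠ 0) (hk : k ≠ 0) :=
    mk_mem_add_of_add_two_le_card_prodFiber (hAne i hi) (hBne j hj) (hCne k hk)
  have hp : 2 ≤ p := (Fact.out : p.Prime).two_le
  refine eq_univ_of_forall fun ⟨r, y⟩ ↦ ?_
  obtain rfl | hr := eq_or_ne r 0
  · have hone : (1 : ZMod 3) ≠ 0 := one_ne_zero
    have hAsplit := card_prodFiber_add_card_prodFiber_neg hA hone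
    have hBsplit := card_prodFiber_add_card_prodFiber_neg hB hone
    have hCsplit := card_prodFiber_add_card_prodFiber_neg hC hone
    obtain hpos | hneg : p + 2 ≤ #(prodFiber A 1) + #(prodFiber B 1) + #(prodFiber C 1) ∨
        p + 2 ≤ #(prodFiber A (-1)) + #(prodFiber B (-1)) + #(prodFiber C (-1)) := by omega
    · exact hcover hone hone hone hpos y
    · have hnone : (-1 : ZMod 3) ≠ 0 := neg_ne_zero.2 hone
      exact hcover hnone hnone hnone hneg y
  · have hnr : -r ≠ 0 := neg_ne_zero.2 hr
    have hAsplit := card_prodFiber_add_card_prodFiber_neg hA hr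
    have hBsplit := card_prodFiber_add_card_prodFiber_neg hB hr
    have hCsplit := card_prodFiber_add_card_prodFiber_neg hC hr
    have hAlt := card_prodFiber_lt hA (-r)
    have hBlt := card_prodFiber_lt hB (-r)
    have hClt := card_prodFiber_lt hC (-r)
    obtain hflipA | hflipB | hflipC :
        p + 2 ≤ #(prodFiber A (-r)) + #(prodFiber B r) + #(prodFiber C r) ∨
        p + 2 ≤ #(prodFiber A r) + #(prodFiber B (-r)) + #(prodFiber C r) ∨
        p + 2 ≤ #(prodFiber A r) + #(prodFiber B r) + #(prodFiber C (-r)) := by omega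
    · simpa using hcover hnr hr hr hflipA y
    · simpa using hcover hr hnr hr hflipB y
    · simpa using hcover hr hr hnr hflipC y

theorem add_add_eq_univ_of_three_mul_lt_card (hA : ∀ a ∈ A, IsUnit a) (hB : ∀ b ∈ B, IsUnit b)
    (hC : ∀ c ∈ C, IsUnit c) (hAne : A.Nonempty) (hBne : B.Nonempty) (hCne : C.Nonempty)
    (hsum : 3 * p < #A + #B + #C) (hAB : p ≤ max #A #B) (hBC : p ≤ max #B #C)
    (hCA : p ≤ max #C #A) : A + B + C = univ := by
  by_cases hfibA : ∀ i ≠ 0, (prodFiber A i).Nonempty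
  · by_cases hfibB : ∀ i ≠ 0, (prodFiber B i).Nonempty
    · by_cases hfibC : ∀ i ≠ 0, (prodFiber C i).Nonempty
      · exact add_add_eq_univ_of_forall_prodFiber_nonempty hA hB hC hsum hfibA hfibB hfibC
      · push Not at hfibC
        obtain ⟨k, hk, hempty⟩ := hfibC
        exact add_add_eq_univ_of_prodFiber_eq_empty hA hB hC hCne hsum (by omega) hBC hk hempty
    · push Not at hfibB
      obtain ⟨k, hk, hempty⟩ := hfibB
      rw [add_right_comm]
      exact add_add_eq_univ_of_prodFiber_eq_empty hA hC hB hBne (by omega) hAB (by omega) hk hempty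
  · push Not at hfibA
    obtain ⟨k, hk, hempty⟩ := hfibA
    rw [add_assoc, add_comm]
    exact add_add_eq_univ_of_prodFiber_eq_empty hB hC hA hAne (by omega) (by omega) hCA hk hempty

end ThreePrime

section QuadraticInequality

variable {a b c : ℕ}

theorem three_mul_lt_add_of_mul_add_lt {n : ℕ} (h : n * (a + b + c) < a * b + b * c + c * a) :
    3 * n < a + b + c := by
  have hsq : 3 * (a * b + b * c + c * a) ≤ (a + b + c) * (a + b + c) := by
    zify
    nlinarith [sq_nonneg ((a : ℤ) - b), sq_nonneg ((b : ℤ) - c), sq_nonneg ((c : ℤ) - a)]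
  by_contra! hle
  nlinarith [Nat.mul_le_mul_right (a + b + c) hle]

theorem pos_of_mul_add_lt {n : ℕ} (ha : a ≤ 2 * n) (hb : b ≤ 2 * n)
    (h : n * (a + b + c) < a * b + b * c + c * a) : 0 < c := by
  by_contra! hc
  obtain rfl : c = 0 := by omega
  nlinarith [Nat.mul_le_mul_left a hb, Nat.mul_le_mul_right b ha]

theorem five_le_max_of_mul_add_lt (hc : c ≤ 8)
    (h : 5 * (a + b + c) < a * b + b * c + c * a) : 5 ≤ max a b := by
  by_contra! hmax
  obtain ⟨ha, hb⟩ := max_lt_iff.1 hmax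
  interval_cases a <;> interval_cases b <;> omega

end QuadraticInequality

theorem stmt11_general {p : ℕ} [Fact p.Prime] (hp : p ≠ 3) (A B C : Finset (ZMod (3 * p)))
    (hA : ∀ a ∈ A, IsUnit a) (hB : ∀ b ∈ B, IsUnit b) (hC : ∀ c ∈ C, IsUnit c)
    (hAne : A.Nonempty) (hBne : B.Nonempty) (hCne : C.Nonempty)
    (hsum : 3 * p < #A + #B + #C)
    (hAB : p ≤ max #A #B) (hBC : p ≤ max #B #C) (hCA : p ≤ max #C #A) :
    ∀ x : ZMod (3 * p), ∃ a ∈ A, ∃ b ∈ B, ∃ c ∈ C, x = a + b + c := by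
  intro x
  let e := ZMod.chineseRemainder ((Nat.coprime_primes Nat.prime_three Fact.out).2 hp.symm)
  have hunit {S : Finset (ZMod (3 * p))} (hS : ∀ s ∈ S, IsUnit s) : ∀ s ∈ S.image e, IsUnit s :=
    forall_mem_image.2 fun s hs ↦ (hS s hs).map e
  have hcard (S : Finset (ZMod (3 * p))) : #(S.image e) = #S :=
    card_image_of_injective S e.injective
  have himage : A.image e + B.image e + C.image e = univ := by
    refine add_add_eq_univ_of_three_mul_lt_card (hunit hA) (hunit hB) (hunit hC)
      (hAne.image e) (hBne.image e) (hCne.image e) ?_ ?_ ?_ ?_ <;> simpa only [hcard]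
  rw [← image_add, ← image_add] at himage
  have hx : x ∈ A + B + C := e.injective.mem_finset_image.1 (himage ▸ mem_univ (e x))
  obtain ⟨_, hab, c, hc, rfl⟩ := mem_add.1 hx
  obtain ⟨a, ha, b, hb, rfl⟩ := mem_add.1 hab
  exact ⟨a, ha, b, hb, c, hc, rfl⟩

/-- Lemma (checked by computer in the paper): if `A, B, C ⊆ (ℤ/15ℤ)*` satisfy
`|A||B| + |B||C| + |C||A| > 5(|A| + |B| + |C|)`, then `A + B + C = ℤ/15ℤ`. -/
theorem stmt11 (A B C : Finset (ZMod 15))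
    (hA : ∀ a ∈ A, IsUnit a) (hB : ∀ b ∈ B, IsUnit b) (hC : ∀ c ∈ C, IsUnit c)
    (h : A.card * B.card + B.card * C.card + C.card * A.card >
      5 * (A.card + B.card + C.card)) :
    ∀ x : ZMod 15, ∃ a ∈ A, ∃ b ∈ B, ∃ c ∈ C, x = a + b + c := by
  have : Fact (Nat.Prime 5) := ⟨Nat.prime_five⟩
  have hA8 : #A ≤ 8 := card_le_totient_of_forall_isUnit hA
  have hB8 : #B ≤ 8 := card_le_totient_of_forall_isUnit hB
  have hC8 : #C ≤ 8 := card_le_totient_of_forall_isUnit hC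
  have hBCA : 5 * (#B + #C + #A) < #B * #C + #C * #A + #A * #B := by linarith
  have hCAB : 5 * (#C + #A + #B) < #C * #A + #A * #B + #B * #C := by linarith
  exact stmt11_general (p := 5) (by decide) A B C hA hB hC
    (card_pos.1 (pos_of_mul_add_lt (n := 5) (by omega) (by omega) hBCA))
    (card_pos.1 (pos_of_mul_add_lt (n := 5) (by omega) (by omega) hCAB))
    (card_pos.1 (pos_of_mul_add_lt (n := 5) (by omega) (by omega) h))
    (three_mul_lt_add_of_mul_add_lt h) (five_le_max_of_mul_add_lt hC8 h)
    (five_le_max_of_mul_add_lt hA8 hBCA) (five_le_max_of_mul_add_lt hB8 hCAB)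
end
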